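/- arXiv:1209.3385 — 3 statements merged into one kernel-verified Lean document; each statement's English description precedes it below -/
import Mathlib

section
/- For every n∈ℕ, W>0, λ₀∈(−2,2) and ξ₁,ξ₂∈ℝ: F₂(λ₀+ξ₁/(Nρ(λ₀)), λ₀+ξ₂/(Nρ(λ₀))) = −C(ξ)·(det J)^{−2}·(4π)^{−N}·∫ exp{−(W²/2)∑_{j=−n+1}^{n}Tr(V_j*A_jV_j−A_{j−1})²}·exp{−∑_{j=−n}^{n}(f(a_j)+f(b_j)) − (i/(Nρ(λ₀)))∑_{j=−n}^{n}Tr((P_jU_{−n})* A_j (P_jU_{−n}) ξ̂)}·∏_{l=−n}^{n}(a_l−b_l)² dμ(U_{−n}) da db ∏_{q=−n+1}^{n}dμ(V_q), where the integral runs over a=(a_{−n},…,a_n)∈ℝ^N, b=(b_{−n},…,b_n)∈ℝ^N, and over U_{−n},V_{−n+1},…,V_n in the unitary group U(2) with normalized Haar measure dμ; here A_j=diag(a_j,b_j), P_j=V_jV_{j−1}⋯V_{−n+1} (with P_{−n}=I), ξ̂=diag(ξ₁,ξ₂), f(x)=(x+iλ₀/2)²/2−Log(x−iλ₀/2) with Log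 the principal branch of the complex logarithm (so exp{−f(x)}=(x−iλ₀/2)·exp{−(x+iλ₀/2)²/2}), and C(ξ)=exp{λ₀(ξ₁+ξ₂)/(2ρ(λ₀)) + (ξ₁²+ξ₂²)/(2Nρ(λ₀)²)}. -/
open MeasureTheory

/-- Borel σ-algebra on 2×2 complex matrices. -/
noncomputable instance : MeasurableSpace (Matrix (Fin 2) (Fin 2) ℂ) := borel _

instance : BorelSpace (Matrix (Fin 2) (Fin 2) ℂ) := ⟨rfl⟩

/-- The `N×N` matrix `−Δ` (discrete Neumann Laplacian). -/
noncomputable def negLap (m : ℕ) : Matrix (Fin m) (Fin m) ℝ :=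
  Matrix.of fun i j =>
    if i = j then 2 - (if (i : ℕ) = 0 then 1 else 0) - (if (i : ℕ) = m - 1 then 1 else 0)
    else if (i : ℕ) + 1 = (j : ℕ) ∨ (j : ℕ) + 1 = (i : ℕ) then -1 else 0

/-- `J = (−W²Δ + 1)^{−1}`. -/
noncomputable def Jmat (n : ℕ) (W : ℝ) : Matrix (Fin (2*n+1)) (Fin (2*n+1)) ℝ :=
  (W^2 • negLap (2*n+1) + 1)⁻¹

/-- The Hermitian band matrix built from diagonal entries `d` and off-diagonal data `o`. -/
noncomputable def bandH (n : ℕ) (d : Fin (2*n+1) → ℝ)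
    (o : {q : Fin (2*n+1) × Fin (2*n+1) // q.1 < q.2} → ℝ × ℝ) :
    Matrix (Fin (2*n+1)) (Fin (2*n+1)) ℂ :=
  Matrix.of fun i j =>
    if h : i < j then ⟨(o ⟨(i, j), h⟩).1, (o ⟨(i, j), h⟩).2⟩
    else if h' : j < i then ⟨(o ⟨(j, i), h'⟩).1, -((o ⟨(j, i), h'⟩).2)⟩
    else ((d i : ℝ) : ℂ)

/-- The Gaussian density of the 1D band-matrix ensemble. -/
noncomputable def bandDens (n : ℕ) (W : ℝ) (d : Fin (2*n+1) → ℝ)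
    (o : {q : Fin (2*n+1) × Fin (2*n+1) // q.1 < q.2} → ℝ × ℝ) : ℝ :=
  (∏ i, (Real.sqrt (2 * Real.pi * Jmat n W i i))⁻¹ *
      Real.exp (-(d i)^2 / (2 * Jmat n W i i))) *
  ∏ q : {q : Fin (2*n+1) × Fin (2*n+1) // q.1 < q.2},
    (Real.pi * Jmat n W q.1.1 q.1.2)⁻¹ *
      Real.exp (-(((o q).1)^2 + ((o q).2)^2) / Jmat n W q.1.1 q.1.2)

/-- `F₂(λ₁,λ₂) = E{det(λ₁−H)·det(λ₂−H)}`. -/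
noncomputable def F2 (n : ℕ) (W : ℝ) (l1 l2 : ℝ) : ℂ :=
  ∫ ω : (Fin (2*n+1) → ℝ) × ({q : Fin (2*n+1) × Fin (2*n+1) // q.1 < q.2} → ℝ × ℝ),
    ((bandDens n W ω.1 ω.2 : ℝ) : ℂ) *
      ((l1 : ℂ) • (1 : Matrix (Fin (2*n+1)) (Fin (2*n+1)) ℂ) - bandH n ω.1 ω.2).det *
      ((l2 : ℂ) • (1 : Matrix (Fin (2*n+1)) (Fin (2*n+1)) ℂ) - bandH n ω.1 ω.2).det

/-- `ρ(λ) = √(4−λ²)/(2π)`. -/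
noncomputable def rho (l : ℝ) : ℝ := Real.sqrt (4 - l^2) / (2 * Real.pi)

/-- Extend `x : Fin m → ℝ` to `ℕ → ℝ` by zero. -/
noncomputable def pad (m : ℕ) (x : Fin m → ℝ) : ℕ → ℝ :=
  fun j => if h : j < m then x ⟨j, h⟩ else 0

/-- `f(x) = (x+iλ₀/2)²/2 − Log(x−iλ₀/2)` (principal branch). -/
noncomputable def ffun (l0 : ℝ) (x : ℝ) : ℂ :=
  ((x : ℂ) + Complex.I * (l0 : ℂ)/2)^2/2 - Complex.log ((x : ℂ) - Complex.I * (l0 : ℂ)/2)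

/-- `A_j = diag(a_j, b_j)` (indices through `ℕ`, extended by zero). -/
noncomputable def Amat (n : ℕ) (a b : Fin (2*n+1) → ℝ) (j : ℕ) : Matrix (Fin 2) (Fin 2) ℂ :=
  Matrix.diagonal ![((pad (2*n+1) a j : ℝ) : ℂ), ((pad (2*n+1) b j : ℝ) : ℂ)]

/-- The unitary `V_j` as a matrix: slot `0` is `U_{−n}`, slots `1,…,N−1` are
`V_{−n+1},…,V_n`; out of range it is `1`. -/
noncomputable def Vpad (n : ℕ) (V : Fin (2*n+1) → Matrix.unitaryGroup (Fin 2) ℂ) (j : ℕ) :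
    Matrix (Fin 2) (Fin 2) ℂ :=
  if h : j < 2*n+1 then (V ⟨j, h⟩ : Matrix (Fin 2) (Fin 2) ℂ) else 1

/-- `P_j = V_j V_{j−1} ⋯ V_{−n+1}` with `P_{−n} = I` (slot indexing as in `Vpad`). -/
noncomputable def Pprod (n : ℕ) (V : Fin (2*n+1) → Matrix.unitaryGroup (Fin 2) ℂ) :
    ℕ → Matrix (Fin 2) (Fin 2) ℂ
  | 0 => 1
  | (j + 1) => Vpad n V (j + 1) * Pprod n V j

/-- The integrand of the representation (2.11):
`exp{−(W²/2)∑Tr(V_j*A_jV_j−A_{j−1})² − ∑(f(a_j)+f(b_j))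
  − (i/(Nρ))∑Tr((P_jU_{−n})*A_j(P_jU_{−n})ξ̂)}·∏(a_l−b_l)²`. -/
noncomputable def G2 (n : ℕ) (W l0 ξ₁ ξ₂ : ℝ) (a b : Fin (2*n+1) → ℝ)
    (V : Fin (2*n+1) → Matrix.unitaryGroup (Fin 2) ℂ) : ℂ :=
  Complex.exp
    (-(((W : ℝ) : ℂ)^2/2) * ∑ j ∈ Finset.Ico 1 (2*n+1),
        ((star (Vpad n V j) * Amat n a b j * Vpad n V j - Amat n a b (j-1))^2).trace
      - ∑ j ∈ Finset.range (2*n+1),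
          (ffun l0 (pad (2*n+1) a j) + ffun l0 (pad (2*n+1) b j))
      - (Complex.I / (((2*n+1 : ℝ) * rho l0 : ℝ) : ℂ)) * ∑ j ∈ Finset.range (2*n+1),
          (star (Pprod n V j * (V ⟨0, Nat.succ_pos _⟩ : Matrix (Fin 2) (Fin 2) ℂ)) *
            Amat n a b j *
            (Pprod n V j * (V ⟨0, Nat.succ_pos _⟩ : Matrix (Fin 2) (Fin 2) ℂ)) *
            Matrix.diagonal ![((ξ₁ : ℝ) : ℂ), ((ξ₂ : ℝ) : ℂ)]).trace)
  * ∏ l ∈ Finset.range (2*n+1),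
      (((pad (2*n+1) a l - pad (2*n+1) b l : ℝ) : ℂ))^2

/-- `C(ξ) = exp{λ₀(ξ₁+ξ₂)/(2ρ(λ₀)) + (ξ₁²+ξ₂²)/(2Nρ(λ₀)²)}`. -/
noncomputable def Cxi (n : ℕ) (l0 ξ₁ ξ₂ : ℝ) : ℝ :=
  Real.exp (l0 * (ξ₁ + ξ₂) / (2 * rho l0) + (ξ₁^2 + ξ₂^2) / (2 * (2*n+1) * (rho l0)^2))

theorem deriv_prod_aux {R : Type*} [CommRing R] [Algebra ℂ R] (D : Derivation ℂ R R)
    {ι : Type*} [DecidableEq ι] (s : Finset ι) (f : ι → R) :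
    D (∏ i ∈ s, f i) = ∑ i ∈ s, D (f i) * ∏ j ∈ s.erase i, f j := by
  induction s using Finset.induction_on with
  | empty => simp
  | insert a s ha ih =>
    rw [Finset.prod_insert ha, Derivation.leibniz, ih, Finset.sum_insert ha,
      Finset.erase_insert ha, smul_eq_mul, smul_eq_mul, Finset.mul_sum, add_comm]
    congr 1
    · ring
    · apply Finset.sum_congr rfl
      intro i hi
      have hia : i ≠ a := fun h => ha (h ▸ hi)
      rw [Finset.erase_insert_of_ne hia.symm, Finset.prod_insert (by simp [ha])]
      ring

theorem deriv_det_aux {R : Type*} [CommRing R] [Algebra ℂ R] (D : Derivation ℂ R R)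
    {m : ℕ} (A : Matrix (Fin (m+1)) (Fin (m+1)) R) :
    D A.det = ∑ c : Fin (m+1), ∑ r : Fin (m+1), (-1)^((r:ℕ) + (c:ℕ)) * D (A r c) *
      (A.submatrix r.succAbove c.succAbove).det := by
  have h1 : D A.det = ∑ c, (A.updateCol c (fun r => D (A r c))).det := by
    simp only [Matrix.det_apply, map_sum, Units.smul_def, map_zsmul]
    rw [Finset.sum_comm]
    apply Finset.sum_congr rfl
    intro σ _
    rw [deriv_prod_aux, Finset.smul_sum]
    apply Finset.sum_congr rfl
    intro c _
    congr 1
    rw [← Finset.mul_prod_erase Finset.univ _ (Finset.mem_univ c)]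
    congr 1
    · simp
    · apply Finset.prod_congr rfl
      intro j hj
      rw [Matrix.updateCol_ne (Finset.ne_of_mem_erase hj)]
  rw [h1]
  apply Finset.sum_congr rfl
  intro c _
  rw [Matrix.det_succ_column _ c]
  apply Finset.sum_congr rfl
  intro r _
  rw [Matrix.submatrix_updateCol_succAbove, Matrix.updateCol_self]

/-- Recursion for Gaussian expectations of minors. -/
theorem minor_rec {P R : Type*} [CommRing R] [Algebra ℂ R] (E : R →ₗ[ℂ] ℂ)
    (M : Matrix P P R) (D : P → P → Derivation ℂ R R) (M0 : P → P → ℂ) (C : P → P → P → P → ℂ)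
    (hS : ∀ p q f, E (M p q * f) = M0 p q * E f + E (D p q f))
    (hD : ∀ p q r s, D p q (M r s) = algebraMap ℂ R (C p q r s))
    (m : ℕ) (f g : Fin (m+2) → P) :
    E (M.submatrix f g).det =
      ∑ c : Fin (m+2), (-1)^(c:ℕ) * M0 (f 0) (g c) *
          E (M.submatrix (f ∘ Fin.succ) (g ∘ c.succAbove)).det +
      ∑ r : Fin (m+1), (-1)^(r:ℕ) * ∑ c : Fin (m+2), ∑ e : Fin (m+1), (-1)^((c:ℕ)+(e:ℕ)) *
        C (f 0) (g c) (f r.succ) (g (c.succAbove e)) *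
        E (M.submatrix (f ∘ Fin.succ ∘ r.succAbove) (g ∘ c.succAbove ∘ e.succAbove)).det := by
  have hsgn : ∀ (k : ℕ) (x : R), E ((-1)^k * x) = (-1)^k * E x := by
    intro k x
    rcases Nat.even_or_odd k with hk | hk
    · simp [hk.neg_one_pow]
    · simp [hk.neg_one_pow]
  have hal : ∀ (z : ℂ) (x : R), E (algebraMap ℂ R z * x) = z * E x := by
    intro z x
    rw [← Algebra.smul_def, map_smul, smul_eq_mul]
  rw [Matrix.det_succ_row_zero, map_sum]
  have h1 : ∀ c : Fin (m+2), E ((-1)^(c:ℕ) * (M.submatrix f g) 0 c *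
      ((M.submatrix f g).submatrix Fin.succ c.succAbove).det) =
      (-1)^(c:ℕ) * M0 (f 0) (g c) *
          E (M.submatrix (f ∘ Fin.succ) (g ∘ c.succAbove)).det +
      ∑ r : Fin (m+1), (-1)^(r:ℕ) * ∑ e : Fin (m+1), (-1)^((c:ℕ)+(e:ℕ)) *
        C (f 0) (g c) (f r.succ) (g (c.succAbove e)) *
        E (M.submatrix (f ∘ Fin.succ ∘ r.succAbove) (g ∘ c.succAbove ∘ e.succAbove)).det := by
    intro c
    rw [mul_assoc, hsgn, Matrix.submatrix_submatrix, Matrix.submatrix_apply, hS, mul_add,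
      ← mul_assoc, deriv_det_aux, map_sum]
    congr 1
    rw [Finset.mul_sum, Finset.sum_congr rfl (fun e _ => by rw [map_sum, Finset.mul_sum]),
      Finset.sum_comm]
    apply Finset.sum_congr rfl
    intro r _
    rw [Finset.mul_sum]
    apply Finset.sum_congr rfl
    intro e _
    rw [mul_assoc, hsgn, Matrix.submatrix_submatrix, Matrix.submatrix_apply, hD, hal]
    simp only [Function.comp_apply, Function.comp_assoc]
    ring
  rw [Finset.sum_congr rfl (fun c _ => h1 c), Finset.sum_add_distrib]
  congr 1
  rw [Finset.sum_comm]
  apply Finset.sum_congr rfl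
  intro r _
  rw [Finset.mul_sum]

theorem gauss_duality {P R₁ R₂ : Type*} [CommRing R₁] [Algebra ℂ R₁] [CommRing R₂] [Algebra ℂ R₂]
    (E₁ : R₁ →ₗ[ℂ] ℂ) (E₂ : R₂ →ₗ[ℂ] ℂ)
    (M₁ : Matrix P P R₁) (D₁ : P → P → Derivation ℂ R₁ R₁)
    (M₂ : Matrix P P R₂) (D₂ : P → P → Derivation ℂ R₂ R₂)
    (M0 : P → P → ℂ) (C₁ C₂ : P → P → P → P → ℂ)
    (hS₁ : ∀ p q f, E₁ (M₁ p q * f) = M0 p q * E₁ f + E₁ (D₁ p q f))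
    (hD₁ : ∀ p q r s, D₁ p q (M₁ r s) = algebraMap ℂ R₁ (C₁ p q r s))
    (hS₂ : ∀ p q f, E₂ (M₂ p q * f) = M0 p q * E₂ f + E₂ (D₂ p q f))
    (hD₂ : ∀ p q r s, D₂ p q (M₂ r s) = algebraMap ℂ R₂ (C₂ p q r s))
    (hC : ∀ p q r s, C₁ p q r s = - C₂ p s r q) (h1 : E₁ 1 = E₂ 1) :
    ∀ (m : ℕ) (f g : Fin m → P), E₁ (M₁.submatrix f g).det = E₂ (M₂.submatrix f g).det := by
  intro m
  induction m using Nat.strong_induction_on with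
  | _ m ih =>
  intro f g
  match m with
  | 0 => simpa using h1
  | 1 =>
    simp only [Matrix.det_unique, Matrix.submatrix_apply]
    have e1 := hS₁ (f default) (g default) 1
    have e2 := hS₂ (f default) (g default) 1
    rw [mul_one, Derivation.map_one_eq_zero, map_zero, add_zero] at e1 e2
    rw [e1, e2, h1]
  | m + 2 =>
    rw [minor_rec E₁ M₁ D₁ M0 C₁ hS₁ hD₁, minor_rec E₂ M₂ D₂ M0 C₂ hS₂ hD₂]
    congr 1
    · apply Finset.sum_congr rfl
      intro c _
      rw [ih (m+1) (by omega)]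
    · apply Finset.sum_congr rfl
      intro r _
      congr 1
      rw [← Fintype.sum_prod_type', ← Fintype.sum_prod_type']
      let τ : Fin (m+2) × Fin (m+1) → Fin (m+2) × Fin (m+1) :=
        fun x => (x.1.succAbove x.2, x.2.predAbove x.1)
      have hτ : Function.Involutive τ := by
        rintro ⟨c, e⟩
        simp only [τ, Prod.mk.injEq]
        exact ⟨Fin.succAbove_succAbove_predAbove c e, Fin.predAbove_predAbove_succAbove c e⟩
      rw [← Equiv.sum_comp (Function.Involutive.toPerm τ hτ)]
      apply Finset.sum_congr rfl
      rintro ⟨c, e⟩ _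
      simp only [Function.Involutive.coe_toPerm, τ]
      rw [Fin.neg_one_pow_succAbove_add_predAbove, Fin.succAbove_succAbove_predAbove, hC,
        ih m (by omega)]
      have : (g ∘ (c.succAbove e).succAbove ∘ (e.predAbove c).succAbove) =
          g ∘ c.succAbove ∘ e.succAbove := by
        funext k
        simp only [Function.comp_apply]
        rw [Fin.succAbove_succAbove_succAbove_predAbove]
      rw [this]
      ring

/-- Evaluate a complex polynomial at a real point. -/
noncomputable def evR {K : Type*} (x : K → ℝ) (p : MvPolynomial K ℂ) : ℂ :=
  MvPolynomial.eval (fun k => (x k : ℂ)) p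

theorem evR_lineDeriv {K : Type*} [Fintype K] [DecidableEq K] (p : MvPolynomial K ℂ) (k : K) (x : K → ℝ) :
    HasLineDerivAt ℝ (fun x => evR x p) (evR x (MvPolynomial.pderiv k p)) x (Pi.single k 1) := by
  unfold HasLineDerivAt evR
  induction p using MvPolynomial.induction_on with
  | C a => simpa using hasDerivAt_const (0:ℝ) a
  | add p q hp hq =>
    simp only [map_add]
    exact hp.add hq
  | mul_X p i hp =>
    have hX : HasDerivAt (fun t : ℝ => (((x + t • (Pi.single k 1 : K → ℝ)) i : ℝ) : ℂ))
        ((Pi.single k (1:ℂ) : K → ℂ) i) 0 := by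
      have h0 : HasDerivAt (fun t : ℝ => ((x + t • (Pi.single k 1 : K → ℝ)) i : ℝ))
        ((Pi.single k (1:ℝ) : K → ℝ) i) 0 := by
        simpa using ((hasDerivAt_id (0:ℝ)).mul_const ((Pi.single k (1:ℝ) : K → ℝ) i)).const_add (x i)
      convert h0.ofReal_comp using 1
      by_cases h : i = k
      · subst h; simp
      · simp [h]
    have := hp.mul hX
    simp only [map_mul, MvPolynomial.eval_X, Derivation.leibniz, smul_eq_mul, map_add]
    refine HasDerivAt.congr_deriv (f := fun t : ℝ => _) this ?_
    by_cases h : i = k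
    · subst h
      simp only [zero_smul, add_zero, Pi.single_eq_same, MvPolynomial.pderiv_X_self, map_one]
      ring
    · simp only [zero_smul, add_zero, Pi.single_eq_of_ne h, MvPolynomial.pderiv_X_of_ne h, map_zero]
      ring

theorem stein_aux {K : Type*} [Fintype K] [DecidableEq K] (w : (K → ℝ) → ℂ)
    (ℓ : K → MvPolynomial K ℂ)
    (hIntg : ∀ p, Integrable (fun x => evR x p * w x))
    (hw : ∀ k x, HasLineDerivAt ℝ w (evR x (ℓ k) * w x) x (Pi.single k 1))
    (k : K) (p : MvPolynomial K ℂ) :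
    ∫ x, evR x (MvPolynomial.pderiv k p) * w x = - ∫ x, evR x (ℓ k * p) * w x := by
  have e : ∀ x, evR x (ℓ k * p) * w x = evR x p * (evR x (ℓ k) * w x) := by
    intro x; simp only [evR, map_mul]; ring
  have h := integral_bilinear_hasLineDerivAt_right_eq_neg_left_of_integrable
    (μ := (volume : Measure (K → ℝ))) (f := fun x => evR x p)
    (f' := fun x => evR x (MvPolynomial.pderiv k p)) (g := w) (g' := fun x => evR x (ℓ k) * w x)
    (v := Pi.single k 1) (B := ContinuousLinearMap.mul ℝ ℂ)
    (by simpa using hIntg _) (by simpa only [ContinuousLinearMap.mul_apply', ← e] using hIntg _)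
    (by simpa using hIntg _) (fun x _ => evR_lineDeriv p k x) (fun x _ => hw k x)
  simp only [ContinuousLinearMap.mul_apply'] at h
  simp only [e]
  rw [h, neg_neg]

theorem integrable_pow_gauss (m : ℕ) {c : ℝ} (hc : 0 < c) :
    Integrable (fun x : ℝ => x^m * Real.exp (-c * x^2)) := by
  have := integrable_rpow_mul_exp_neg_mul_sq hc (s := m) (by
    have : (0:ℝ) ≤ m := Nat.cast_nonneg m
    linarith)
  simpa using this

theorem integrable_poly_gauss {K : Type*} [Fintype K] (w : (K → ℝ) → ℂ)
    (hwm : Continuous w) (A : ℝ) (c : ℝ) (hc : 0 < c)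
    (hw : ∀ x, ‖w x‖ ≤ A * Real.exp (-c * ∑ k, (x k)^2)) (p : MvPolynomial K ℂ) :
    Integrable (fun x => evR x p * w x) := by
  have hcont : ∀ p : MvPolynomial K ℂ, Continuous (fun x : K → ℝ => evR x p) := by
    intro p
    unfold evR
    exact (MvPolynomial.continuous_eval p).comp (by fun_prop)
  induction p using MvPolynomial.induction_on' with
  | monomial u a =>
    have h1 : Integrable (fun x : K → ℝ => ∏ k, (x k)^(u k) * Real.exp (-c * (x k)^2)) :=
      Integrable.fintype_prod (f := fun k (y:ℝ) => y^(u k) * Real.exp (-c * y^2))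
        (fun k => integrable_pow_gauss (u k) hc)
    refine ((h1.norm.const_mul (‖a‖ * A))).mono' ((hcont _).mul hwm).aestronglyMeasurable ?_
    refine Filter.Eventually.of_forall fun x => ?_
    have e2 : evR x (MvPolynomial.monomial u a) = a * ∏ k, ((x k : ℂ))^(u k) := by
      unfold evR
      rw [MvPolynomial.eval_monomial, Finsupp.prod_fintype]
      simp
    rw [norm_mul, e2, norm_mul, norm_prod, norm_prod]
    simp only [norm_mul, norm_pow, Complex.norm_real, Finset.prod_mul_distrib, Real.norm_eq_abs, Real.abs_exp]
    rw [← Real.exp_sum, ← Finset.mul_sum]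
    calc _ ≤ ‖a‖ * (∏ k, |x k|^(u k)) * (A * Real.exp (-c * ∑ k, (x k)^2)) := by
          gcongr
          exact hw x
      _ = _ := by ring
  | add p q hp hq =>
    have := hp.add hq
    refine this.congr (Filter.Eventually.of_forall fun x => ?_)
    simp [evR, add_mul]

open Matrix in
theorem gauss_int_general {K : Type*} [Fintype K] [DecidableEq K] (B : Matrix K K ℝ)
    (hB : B.det ≠ 0) (d : K → ℂ) :
    ∫ x : K → ℝ, Complex.exp (-∑ k, (((B *ᵥ x) k : ℝ) : ℂ)^2 + ∑ k, d k * (((B *ᵥ x) k : ℝ) : ℂ)) =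
      (|B.det|⁻¹ : ℝ) * ((Real.pi : ℂ)^((Fintype.card K : ℂ) / 2) *
        Complex.exp ((∑ k, (d k)^2) / 4)) := by
  have h1 := GaussianFourier.integral_cexp_neg_mul_sum_add (b := 1) (by simp) d
  have hm := Real.map_matrix_volume_pi_eq_smul_volume_pi hB
  have hme : MeasurableEmbedding (Matrix.toLin' B) := by
    have hu : IsUnit B.det := isUnit_iff_ne_zero.mpr hB
    have hc : Continuous (Matrix.toLin' B) := LinearMap.continuous_of_finiteDimensional _
    refine hc.measurableEmbedding ?_
    have : Function.Injective (B.mulVec) := Matrix.mulVec_injective_iff_isUnit.mpr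
      ((Matrix.isUnit_iff_isUnit_det B).mpr hu)
    exact this
  have h2 := hme.integral_map (μ := volume)
    (fun v : K → ℝ => Complex.exp (-1 * ∑ k, (v k : ℂ)^2 + ∑ k, d k * (v k : ℂ)))
  rw [hm, integral_smul_measure, h1, ENNReal.toReal_ofReal (abs_nonneg _)] at h2
  simp only [Matrix.toLin'_apply, neg_mul, one_mul] at h2
  rw [← h2, abs_inv, Complex.real_smul]
  simp

open Matrix in
theorem negLap_eq (m : ℕ) (i k : Fin (m+1)) : negLap (m+1) i k =
    ∑ j ∈ Finset.range m, (((if (i:ℕ) = j+1 then 1 else 0) - (if (i:ℕ) = j then 1 else 0)) *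
      ((if (k:ℕ) = j+1 then 1 else 0) - (if (k:ℕ) = j then 1 else 0)) : ℝ) := by
  have hi := i.2
  have hk := k.2
  have e1 : ∑ j ∈ Finset.range m, (if (i:ℕ) = j+1 then (if (k:ℕ) = j+1 then (1:ℝ) else 0) else 0)
      = if (i:ℕ) = k ∧ (i:ℕ) ≠ 0 then 1 else 0 := by
    rcases Nat.eq_zero_or_pos (i:ℕ) with h0 | h0
    · rw [Finset.sum_eq_zero]
      · simp [h0]
      · intro j _; rw [if_neg (by omega)]
    · rw [Finset.sum_eq_single ((i:ℕ)-1)]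
      · rw [if_pos (by omega)]
        by_cases h : (i:ℕ) = k
        · rw [if_pos (by omega), if_pos (by omega)]
        · rw [if_neg (by omega), if_neg (by omega)]
      · intro b _ hb; rw [if_neg (by omega)]
      · intro h; simp at h; omega
  have e2 : ∑ j ∈ Finset.range m, (if (i:ℕ) = j then (if (k:ℕ) = j then (1:ℝ) else 0) else 0)
      = if (i:ℕ) = k ∧ (i:ℕ) ≠ m then 1 else 0 := by
    rw [Finset.sum_ite_eq, ]
    by_cases h : (i:ℕ) = m
    · simp [h]
    · rw [if_pos (by simp; omega)]
      by_cases h' : (i:ℕ) = k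
      · rw [if_pos (by omega), if_pos (by omega)]
      · rw [if_neg (by omega), if_neg (by omega)]
  have e3 : ∑ j ∈ Finset.range m, (if (i:ℕ) = j then (if (k:ℕ) = j+1 then (1:ℝ) else 0) else 0)
      = if (i:ℕ) + 1 = k then 1 else 0 := by
    rw [Finset.sum_ite_eq]
    by_cases h' : (i:ℕ) + 1 = k
    · rw [if_pos (by simp; omega), if_pos (by omega), if_pos h']
    · rw [if_neg h', ite_eq_right_iff]; intro _; rw [if_neg (by omega)]
  have e4 : ∑ j ∈ Finset.range m, (if (k:ℕ) = j then (if (i:ℕ) = j+1 then (1:ℝ) else 0) else 0)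
      = if (k:ℕ) + 1 = i then 1 else 0 := by
    rw [Finset.sum_ite_eq]
    by_cases h' : (k:ℕ) + 1 = i
    · rw [if_pos (by simp; omega), if_pos (by omega), if_pos h']
    · rw [if_neg h', ite_eq_right_iff]; intro _; rw [if_neg (by omega)]
  have key : ∑ j ∈ Finset.range m, (((if (i:ℕ) = j+1 then 1 else 0) - (if (i:ℕ) = j then 1 else 0)) *
      ((if (k:ℕ) = j+1 then 1 else 0) - (if (k:ℕ) = j then 1 else 0)) : ℝ) =
     (if (i:ℕ) = k ∧ (i:ℕ) ≠ 0 then 1 else 0) + (if (i:ℕ) = k ∧ (i:ℕ) ≠ m then 1 else 0)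
     - (if (i:ℕ) + 1 = k then 1 else 0) - (if (k:ℕ) + 1 = i then 1 else 0) := by
    rw [← e1, ← e2, ← e3, ← e4, ← Finset.sum_add_distrib, ← Finset.sum_sub_distrib,
      ← Finset.sum_sub_distrib]
    apply Finset.sum_congr rfl
    intro j _
    split_ifs <;> norm_num
  rw [key, negLap, Matrix.of_apply]
  simp only [Fin.ext_iff]
  split_ifs <;> first | omega | norm_num

theorem negLap_rowsum (m : ℕ) (i : Fin (m+1)) : ∑ k, negLap (m+1) i k = 0 := by
  simp only [negLap_eq]
  rw [Finset.sum_comm]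
  apply Finset.sum_eq_zero
  intro j hj
  rw [Finset.mem_range] at hj
  rw [← Finset.mul_sum, Finset.sum_sub_distrib]
  have h1 : ∑ k : Fin (m+1), (if (k:ℕ) = j+1 then (1:ℝ) else 0) = 1 := by
    rw [Finset.sum_eq_single ⟨j+1, by omega⟩]
    · simp
    · intro b _ hb; rw [if_neg]; intro h; exact hb (Fin.ext h)
    · simp
  have h2 : ∑ k : Fin (m+1), (if (k:ℕ) = j then (1:ℝ) else 0) = 1 := by
    rw [Finset.sum_eq_single ⟨j, by omega⟩]
    · simp
    · intro b _ hb; rw [if_neg]; intro h; exact hb (Fin.ext h)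
    · simp
  rw [h1, h2]; simp

theorem negLap_symm (m : ℕ) (i k : Fin (m+1)) : negLap (m+1) i k = negLap (m+1) k i := by
  simp only [negLap_eq]
  apply Finset.sum_congr rfl
  intro j _
  ring

/-- The quadratic form of `−Δ`. -/
theorem negLap_quad (m : ℕ) (x : Fin (m+1) → ℝ) :
    ∑ i, ∑ k, negLap (m+1) i k * x i * x k =
      ∑ j ∈ Finset.range m, (pad (m+1) x (j+1) - pad (m+1) x j)^2 := by
  have hp : ∀ j < m+1, ∑ k : Fin (m+1), (if (k:ℕ) = j then (1:ℝ) else 0) * x k = pad (m+1) x j := by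
    intro j hj
    rw [Finset.sum_eq_single ⟨j, hj⟩]
    · simp [pad, hj]
    · intro b _ hb; rw [if_neg, zero_mul]; intro h; exact hb (Fin.ext h)
    · simp
  have hd : ∀ j ∈ Finset.range m, pad (m+1) x (j+1) - pad (m+1) x j =
      ∑ k : Fin (m+1), ((if (k:ℕ) = j+1 then 1 else 0) - (if (k:ℕ) = j then 1 else 0)) * x k := by
    intro j hj
    rw [Finset.mem_range] at hj
    rw [← hp _ (by omega : j + 1 < m + 1), ← hp _ (by omega : j < m + 1), ← Finset.sum_sub_distrib]
    apply Finset.sum_congr rfl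
    intro k _; ring
  symm
  rw [Finset.sum_congr rfl (fun j hj => by rw [hd j hj, sq, Finset.sum_mul_sum])]
  rw [Finset.sum_comm]
  apply Finset.sum_congr rfl
  intro i _
  rw [Finset.sum_comm]
  apply Finset.sum_congr rfl
  intro k _
  rw [negLap_eq, Finset.sum_mul, Finset.sum_mul]
  apply Finset.sum_congr rfl
  intro j _
  ring

/-- `J⁻¹`. -/
noncomputable def Minv (n : ℕ) (W : ℝ) : Matrix (Fin (2*n+1)) (Fin (2*n+1)) ℝ :=
  W^2 • negLap (2*n+1) + 1

theorem Minv_symm (n : ℕ) (W : ℝ) (i k) : Minv n W i k = Minv n W k i := by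
  simp [Minv, Matrix.one_apply, negLap_symm (2*n) i k, eq_comm]

theorem Minv_rowsum (n : ℕ) (W : ℝ) (i) : ∑ k, Minv n W i k = 1 := by
  simp [Minv, Finset.sum_add_distrib, ← Finset.mul_sum, negLap_rowsum (2*n) i, Matrix.one_apply]

theorem Minv_quad (n : ℕ) (W : ℝ) (x : Fin (2*n+1) → ℝ) :
    ∑ i, ∑ k, Minv n W i k * x i * x k =
      W^2 * ∑ j ∈ Finset.range (2*n), (pad (2*n+1) x (j+1) - pad (2*n+1) x j)^2 + ∑ i, (x i)^2 := by
  rw [← negLap_quad]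
  simp only [Minv, Matrix.add_apply, Matrix.smul_apply, smul_eq_mul, add_mul, Finset.sum_add_distrib,
    Finset.mul_sum]
  congr 1
  · apply Finset.sum_congr rfl
    intro i _
    apply Finset.sum_congr rfl
    intro k _
    ring
  · apply Finset.sum_congr rfl
    intro i _
    simp [Matrix.one_apply, sq]

theorem Minv_quad_ge (n : ℕ) (W : ℝ) (x : Fin (2*n+1) → ℝ) :
    ∑ i, (x i)^2 ≤ ∑ i, ∑ k, Minv n W i k * x i * x k := by
  rw [Minv_quad]
  have : 0 ≤ W^2 * ∑ j ∈ Finset.range (2*n), (pad (2*n+1) x (j+1) - pad (2*n+1) x j)^2 :=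
    mul_nonneg (sq_nonneg _) (Finset.sum_nonneg fun _ _ => sq_nonneg _)
  linarith

theorem Minv_posDef (n : ℕ) (W : ℝ) : (Minv n W).PosDef := by
  rw [Matrix.posDef_iff_dotProduct_mulVec]
  refine ⟨?_, ?_⟩
  · ext i k
    simp [Matrix.conjTranspose_apply, Minv_symm n W i k]
  · intro x hx
    have h := Minv_quad_ge n W x
    have h2 : 0 < ∑ i, (x i)^2 := by
      obtain ⟨i, hi⟩ := Function.ne_iff.mp hx
      exact Finset.sum_pos' (fun _ _ => sq_nonneg _) ⟨i, Finset.mem_univ _, by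
        have hi' : x i ≠ 0 := hi
        positivity⟩
    have e : star x ⬝ᵥ (Minv n W).mulVec x = ∑ i, ∑ k, Minv n W i k * x i * x k := by
      simp only [dotProduct, Matrix.mulVec, Finset.mul_sum, Pi.star_apply, star_trivial]
      apply Finset.sum_congr rfl
      intro i _
      apply Finset.sum_congr rfl
      intro k _
      ring
    rw [e]
    linarith

theorem Jmat_eq (n : ℕ) (W : ℝ) : Jmat n W = (Minv n W)⁻¹ := rfl

theorem Minv_mul_J (n : ℕ) (W : ℝ) : Minv n W * Jmat n W = 1 :=
  Matrix.mul_nonsing_inv _ (isUnit_iff_ne_zero.mpr (Minv_posDef n W).det_pos.ne')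

theorem J_mul_Minv (n : ℕ) (W : ℝ) : Jmat n W * Minv n W = 1 :=
  Matrix.nonsing_inv_mul _ (isUnit_iff_ne_zero.mpr (Minv_posDef n W).det_pos.ne')

theorem J_det (n : ℕ) (W : ℝ) : (Jmat n W).det = ((Minv n W).det)⁻¹ := by
  rw [Jmat_eq, Matrix.det_nonsing_inv, Ring.inverse_eq_inv']

theorem J_symm (n : ℕ) (W : ℝ) (i k) : Jmat n W i k = Jmat n W k i := by
  have h : (Minv n W).transpose = Minv n W := by
    ext i k; exact Minv_symm n W k i
  have : (Jmat n W).transpose = Jmat n W := by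
    rw [Jmat_eq, Matrix.transpose_nonsing_inv, h]
  exact congrFun (congrFun this k) i

theorem J_rowsum (n : ℕ) (W : ℝ) (i) : ∑ k, Jmat n W i k = 1 := by
  have h : (Minv n W).mulVec (fun _ => 1) = fun _ => 1 := by
    ext i; simp [Matrix.mulVec, dotProduct, Minv_rowsum]
  have h2 : (Jmat n W).mulVec (fun _ => 1) = fun _ => 1 := by
    conv_lhs => rw [← h]
    rw [Matrix.mulVec_mulVec, J_mul_Minv, Matrix.one_mulVec]
  have := congrFun h2 i
  simpa [Matrix.mulVec, dotProduct] using this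

theorem negLap_offdiag (m : ℕ) (i k : Fin m) (h : i ≠ k) : negLap m i k ≤ 0 := by
  simp only [negLap, Matrix.of_apply, if_neg h]
  split_ifs <;> norm_num

theorem J_pos (n : ℕ) (W : ℝ) (hW : 0 < W) (i k) : 0 < Jmat n W i k := by
  set x : Fin (2*n+1) → ℝ := fun i => Jmat n W i k with hx
  have hM : ∀ i, x i + W^2 * ∑ j, negLap (2*n+1) i j * (x j - x i) = if i = k then 1 else 0 := by
    intro i
    have := congrFun (congrFun (Minv_mul_J n W) i) k
    rw [Matrix.mul_apply, Matrix.one_apply] at this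
    rw [← this]
    simp only [Minv, Matrix.add_apply, Matrix.smul_apply, smul_eq_mul, add_mul,
      Finset.sum_add_distrib, Matrix.one_apply, ite_mul, one_mul, zero_mul, Finset.sum_ite_eq,
      Finset.mem_univ, if_true, mul_sub, Finset.sum_sub_distrib, ← Finset.sum_mul,
      negLap_rowsum (2*n) i]
    rw [Finset.mul_sum]
    simp only [mul_assoc, hx]
    ring
  have hle : ∀ i, (∀ j, x i ≤ x j) → ∀ j, negLap (2*n+1) i j * (x j - x i) ≤ 0 := by
    intro i hi j
    by_cases h : i = j
    · subst h; simp
    · exact mul_nonpos_of_nonpos_of_nonneg (negLap_offdiag _ i j h) (sub_nonneg.mpr (hi j))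
  have hW2 : 0 < W^2 := by positivity
  have hnn : ∀ j, 0 ≤ x j := by
    obtain ⟨i0, hi0⟩ := Finite.exists_min x
    have h1 := hM i0
    have h2 : ∑ j, negLap (2*n+1) i0 j * (x j - x i0) ≤ 0 :=
      Finset.sum_nonpos fun j _ => hle i0 hi0 j
    have h3 : W^2 * ∑ j, negLap (2*n+1) i0 j * (x j - x i0) ≤ 0 :=
      mul_nonpos_of_nonneg_of_nonpos hW2.le h2
    have h4 : (0:ℝ) ≤ if i0 = k then 1 else 0 := by split_ifs <;> norm_num
    intro j
    linarith [hi0 j]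
  have hprop : ∀ i j : Fin (2*n+1), ((i:ℕ)+1 = j ∨ (j:ℕ)+1 = i) → x i = 0 → x j = 0 := by
    intro i j hij hi
    have hmin : ∀ j, x i ≤ x j := fun j => hi ▸ hnn j
    have h1 := hM i
    have h4 : (0:ℝ) ≤ if i = k then 1 else 0 := by split_ifs <;> norm_num
    have h2 : ∑ j, negLap (2*n+1) i j * (x j - x i) ≤ negLap (2*n+1) i j * (x j - x i) := by
      rw [← Finset.add_sum_erase _ _ (Finset.mem_univ j)]
      have : ∑ j ∈ Finset.univ.erase j, negLap (2*n+1) i j * (x j - x i) ≤ 0 :=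
        Finset.sum_nonpos fun j _ => hle i hmin j
      linarith
    have h5 : 0 ≤ ∑ j, negLap (2*n+1) i j * (x j - x i) := by
      by_contra hneg
      push Not at hneg
      have := mul_neg_of_pos_of_neg hW2 hneg
      linarith
    have h6 : negLap (2*n+1) i j = -1 := by
      have hne : i ≠ j := by intro h; subst h; omega
      simp only [negLap, Matrix.of_apply, if_neg hne, if_pos hij]
    rw [h6] at h2
    linarith [hnn j]
  have hup : ∀ i : Fin (2*n+1), x i = 0 → ∀ d : ℕ, ∀ h : (i:ℕ) + d < 2*n+1, x ⟨i + d, h⟩ = 0 := by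
    intro i hi d
    induction d with
    | zero => intro h; exact hi
    | succ d ih =>
      intro h
      exact hprop ⟨i + d, by omega⟩ _ (Or.inl (by simp; omega)) (ih (by omega))
  have hdown : ∀ d : ℕ, ∀ i : Fin (2*n+1), (i:ℕ) = d → x i = 0 → x ⟨0, by omega⟩ = 0 := by
    intro d
    induction d with
    | zero => intro i h hi; rw [← hi]; congr 1; exact Fin.ext h.symm
    | succ d ih =>
      intro i h hi
      exact ih ⟨d, by omega⟩ rfl (hprop i _ (Or.inr (by simp; omega)) hi)
  rcases (hnn i).lt_or_eq with h | h
  · exact h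
  · exfalso
    have h0 := hdown i i rfl h.symm
    have hall : ∀ j, x j = 0 := by
      intro j
      have := hup _ h0 j (by have := j.2; simp; omega)
      simpa using this
    have := hM k
    simp [hall] at this

/-- weight of exponential-polynomial type: line derivative -/
theorem expw_lineDeriv {K : Type*} [Fintype K] [DecidableEq K] (A : ℂ) (q : MvPolynomial K ℂ)
    (k : K) (x : K → ℝ) :
    HasLineDerivAt ℝ (fun x => A * Complex.exp (evR x q))
      (evR x (MvPolynomial.pderiv k q) * (A * Complex.exp (evR x q))) x (Pi.single k 1) := by
  have h := evR_lineDeriv q k x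
  unfold HasLineDerivAt at h ⊢
  have h2 := (h.cexp).const_mul A
  refine h2.congr_deriv ?_
  simp only [zero_smul, add_zero]
  ring

/-- The linear functional given by integrating against `w`. -/
noncomputable def gE {K : Type*} [Fintype K] (w : (K → ℝ) → ℂ)
    (hIntg : ∀ p : MvPolynomial K ℂ, Integrable (fun x => evR x p * w x)) :
    MvPolynomial K ℂ →ₗ[ℂ] ℂ where
  toFun p := ∫ x, evR x p * w x
  map_add' p q := by
    rw [← integral_add (hIntg p) (hIntg q)]
    congr 1; funext x; simp [evR, add_mul]
  map_smul' c p := by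
    rw [RingHom.id_apply, smul_eq_mul, ← integral_const_mul]
    congr 1; funext x; simp [evR, MvPolynomial.smul_eval, mul_assoc]

theorem continuous_evR {K : Type*} [Fintype K] (p : MvPolynomial K ℂ) :
    Continuous (fun x : K → ℝ => evR x p) := by
  unfold evR
  exact (MvPolynomial.continuous_eval p).comp (by fun_prop)

abbrev QQ (n : ℕ) := {q : Fin (2*n+1) × Fin (2*n+1) // q.1 < q.2}
abbrev KH (n : ℕ) := Fin (2*n+1) ⊕ (QQ n ⊕ QQ n)

noncomputable def vH (n : ℕ) (W : ℝ) : KH n → ℝ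
  | Sum.inl i => Jmat n W i i
  | Sum.inr (Sum.inl q) => Jmat n W q.1.1 q.1.2 / 2
  | Sum.inr (Sum.inr q) => Jmat n W q.1.1 q.1.2 / 2

theorem vH_pos (n : ℕ) (W : ℝ) (hW : 0 < W) (k : KH n) : 0 < vH n W k := by
  rcases k with i | q | q
  · exact J_pos n W hW _ _
  · exact half_pos (J_pos n W hW _ _)
  · exact half_pos (J_pos n W hW _ _)

noncomputable def wH (n : ℕ) (W : ℝ) (x : KH n → ℝ) : ℂ :=
  ((bandDens n W (fun i => x (Sum.inl i))
    (fun q => (x (Sum.inr (Sum.inl q)), x (Sum.inr (Sum.inr q)))) : ℝ) : ℂ)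

theorem wH_prod (n : ℕ) (W : ℝ) (hW : 0 < W) (x : KH n → ℝ) :
    wH n W x = ((∏ k, ((Real.sqrt (2 * Real.pi * vH n W k))⁻¹ *
      Real.exp (-(x k)^2 / (2 * vH n W k))) : ℝ) : ℂ) := by
  unfold wH bandDens
  congr 1
  rw [Fintype.prod_sum_type, Fintype.prod_sum_type, ← Finset.prod_mul_distrib (f := fun q : QQ n => _)]
  congr 1
  apply Finset.prod_congr rfl
  intro q _
  have hJ := J_pos n W hW q.1.1 q.1.2
  simp only [vH]
  have e1 : 2 * Real.pi * (Jmat n W q.1.1 q.1.2 / 2) = Real.pi * Jmat n W q.1.1 q.1.2 := by ring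
  have e2 : 2 * (Jmat n W q.1.1 q.1.2 / 2) = Jmat n W q.1.1 q.1.2 := by ring
  rw [e1, e2, mul_mul_mul_comm, ← Real.exp_add, ← mul_inv, Real.mul_self_sqrt (by positivity)]
  congr 2
  ring

noncomputable def qH (n : ℕ) (W : ℝ) : MvPolynomial (KH n) ℂ :=
  ∑ k, MvPolynomial.C ((-(2 * vH n W k)⁻¹ : ℝ) : ℂ) * MvPolynomial.X k ^ 2

noncomputable def ZH (n : ℕ) (W : ℝ) : ℝ := ∏ k, (Real.sqrt (2 * Real.pi * vH n W k))⁻¹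

theorem evR_qH (n : ℕ) (W : ℝ) (x : KH n → ℝ) :
    evR x (qH n W) = ((∑ k, -(x k)^2 / (2 * vH n W k) : ℝ) : ℂ) := by
  simp only [evR, qH, map_sum, map_mul, map_pow, MvPolynomial.eval_C, MvPolynomial.eval_X]
  push_cast
  apply Finset.sum_congr rfl
  intro k _
  ring

theorem wH_exp (n : ℕ) (W : ℝ) (hW : 0 < W) :
    wH n W = fun x => ((ZH n W : ℝ) : ℂ) * Complex.exp (evR x (qH n W)) := by
  funext x
  rw [wH_prod n W hW, Finset.prod_mul_distrib, ← Real.exp_sum, evR_qH]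
  push_cast
  rw [ZH]
  push_cast
  rfl

theorem wH_int (n : ℕ) (W : ℝ) (hW : 0 < W) (p : MvPolynomial (KH n) ℂ) :
    Integrable (fun x => evR x p * wH n W x) := by
  have hV : 0 < ∑ k, vH n W k + 1 := by
    have : 0 ≤ ∑ k, vH n W k := Finset.sum_nonneg fun k _ => (vH_pos n W hW k).le
    linarith
  have hZ : 0 ≤ ZH n W := Finset.prod_nonneg fun k _ => by positivity
  refine integrable_poly_gauss (wH n W) ?_ (ZH n W) (1/(2 * (∑ k, vH n W k + 1))) (by positivity) ?_ p
  · rw [wH_exp n W hW]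
    exact continuous_const.mul (Complex.continuous_exp.comp (continuous_evR _))
  · intro x
    simp only [wH_exp n W hW, evR_qH]
    simp only [norm_mul, Complex.norm_real, ← Complex.ofReal_exp, Real.norm_eq_abs, Real.abs_exp,
      abs_of_nonneg hZ]
    apply mul_le_mul_of_nonneg_left _ hZ
    apply Real.exp_le_exp.mpr
    rw [Finset.mul_sum]
    apply Finset.sum_le_sum
    intro k _
    have hk := vH_pos n W hW k
    have hle : vH n W k ≤ ∑ k, vH n W k + 1 := by
      have := Finset.single_le_sum (f := vH n W) (fun k _ => (vH_pos n W hW k).le) (Finset.mem_univ k)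
      linarith
    rw [neg_div, neg_mul, neg_le_neg_iff, div_mul_eq_mul_div, one_mul]
    gcongr

noncomputable def EH (n : ℕ) (W : ℝ) (hW : 0 < W) : MvPolynomial (KH n) ℂ →ₗ[ℂ] ℂ :=
  gE (wH n W) (wH_int n W hW)

theorem EH_one (n : ℕ) (W : ℝ) (hW : 0 < W) : EH n W hW 1 = 1 := by
  change ∫ x, evR x 1 * wH n W x = 1
  simp only [evR, map_one, one_mul, wH_prod n W hW]
  rw [integral_complex_ofReal, integral_fintype_prod_volume_eq_prod
    (f := fun k (y:ℝ) => (Real.sqrt (2 * Real.pi * vH n W k))⁻¹ * Real.exp (-y^2 / (2 * vH n W k)))]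
  rw [Finset.prod_eq_one]
  · simp
  intro k _
  have hk := vH_pos n W hW k
  rw [integral_const_mul]
  have := integral_gaussian (1 / (2 * vH n W k))
  have e : ∀ y : ℝ, -y^2/(2 * vH n W k) = -(1 / (2 * vH n W k)) * y^2 := by intro y; ring
  simp only [e, this]
  have e2 : Real.pi / (1 / (2 * vH n W k)) = 2 * Real.pi * vH n W k := by field_simp
  rw [e2, inv_mul_cancel₀]
  positivity

theorem EH_stein (n : ℕ) (W : ℝ) (hW : 0 < W) (k : KH n) (p) :
    EH n W hW (MvPolynomial.X k * p) = ((vH n W k : ℝ) : ℂ) * EH n W hW (MvPolynomial.pderiv k p) := by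
  have h := stein_aux (wH n W) (fun k => MvPolynomial.pderiv k (qH n W)) (wH_int n W hW)
    (by rw [wH_exp n W hW]; exact fun k x => expw_lineDeriv _ _ k x) k p
  have hk := vH_pos n W hW k
  have e : MvPolynomial.pderiv k (qH n W) = MvPolynomial.C ((-(vH n W k)⁻¹ : ℝ) : ℂ) * MvPolynomial.X k := by
    rw [qH, map_sum, Finset.sum_eq_single k]
    · rw [Derivation.leibniz, Derivation.leibniz_pow]
      simp only [MvPolynomial.pderiv_X_self, MvPolynomial.pderiv_C, smul_zero, add_zero]
      rw [show (-(vH n W k)⁻¹ : ℝ) = 2 * (-(2*vH n W k)⁻¹) by field_simp, Complex.ofReal_mul, map_mul]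
      have : (MvPolynomial.C ((2:ℝ):ℂ) : MvPolynomial (KH n) ℂ) = 2 := by
        rw [Complex.ofReal_ofNat]; exact map_ofNat MvPolynomial.C 2
      rw [this]
      simp
      ring
    · intro j _ hj
      rw [Derivation.leibniz, Derivation.leibniz_pow, MvPolynomial.pderiv_X_of_ne hj]
      simp
    · simp
  have h2 : EH n W hW (MvPolynomial.pderiv k p) =
      - EH n W hW (MvPolynomial.pderiv k (qH n W) * p) := h
  rw [h2, e, mul_assoc, MvPolynomial.C_mul', map_smul, smul_eq_mul]
  have : ((vH n W k : ℝ) : ℂ) ≠ 0 := by exact_mod_cast hk.ne'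
  push_cast
  field_simp

noncomputable def hP (n : ℕ) (i j : Fin (2*n+1)) : MvPolynomial (KH n) ℂ :=
  if h : i < j then MvPolynomial.X (Sum.inr (Sum.inl ⟨(i, j), h⟩)) +
      MvPolynomial.C Complex.I * MvPolynomial.X (Sum.inr (Sum.inr ⟨(i, j), h⟩))
  else if h' : j < i then MvPolynomial.X (Sum.inr (Sum.inl ⟨(j, i), h'⟩)) -
      MvPolynomial.C Complex.I * MvPolynomial.X (Sum.inr (Sum.inr ⟨(j, i), h'⟩))
  else MvPolynomial.X (Sum.inl i)

noncomputable def DhP (n : ℕ) (W : ℝ) (i j : Fin (2*n+1)) :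
    Derivation ℂ (MvPolynomial (KH n) ℂ) (MvPolynomial (KH n) ℂ) :=
  if h : i < j then ((Jmat n W i j / 2 : ℝ) : ℂ) • (MvPolynomial.pderiv (Sum.inr (Sum.inl ⟨(i, j), h⟩)) +
      Complex.I • MvPolynomial.pderiv (Sum.inr (Sum.inr ⟨(i, j), h⟩)))
  else if h' : j < i then ((Jmat n W j i / 2 : ℝ) : ℂ) •
      (MvPolynomial.pderiv (Sum.inr (Sum.inl ⟨(j, i), h'⟩)) -
      Complex.I • MvPolynomial.pderiv (Sum.inr (Sum.inr ⟨(j, i), h'⟩)))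
  else ((Jmat n W i i : ℝ) : ℂ) • MvPolynomial.pderiv (Sum.inl i)

theorem EH_hP (n : ℕ) (W : ℝ) (hW : 0 < W) (i j) (f) :
    EH n W hW (hP n i j * f) = EH n W hW (DhP n W i j f) := by
  unfold hP DhP
  split_ifs with h h'
  · rw [add_mul, map_add, mul_assoc, MvPolynomial.C_mul', map_smul, EH_stein, EH_stein]
    simp [vH]; ring
  · rw [sub_mul, map_sub, mul_assoc, MvPolynomial.C_mul', map_smul, EH_stein, EH_stein]
    simp [vH]; ring
  · rw [EH_stein]
    simp [vH]

theorem DhP_hP (n : ℕ) (W : ℝ) (i j k l : Fin (2*n+1)) :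
    DhP n W i j (hP n k l) = MvPolynomial.C (if i = l ∧ j = k then ((Jmat n W i j : ℝ) : ℂ) else 0) := by
  have hI : (MvPolynomial.C Complex.I * MvPolynomial.C Complex.I : MvPolynomial (KH n) ℂ) = -1 := by
    rw [← MvPolynomial.C_mul, Complex.I_mul_I]; simp
  have hX : ∀ a b : KH n, MvPolynomial.pderiv a (MvPolynomial.X b : MvPolynomial (KH n) ℂ) =
      if a = b then 1 else 0 := by
    intro a b
    split_ifs with h
    · rw [h, MvPolynomial.pderiv_X_self]
    · exact MvPolynomial.pderiv_X_of_ne (Ne.symm h)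
  have hS : ∀ (c : ℂ) (p : MvPolynomial (KH n) ℂ), c • p = MvPolynomial.C c * p :=
    fun c p => (MvPolynomial.C_mul').symm
  have h2 : ∀ r : ℝ, (MvPolynomial.C (r:ℂ) : MvPolynomial (KH n) ℂ) = 2 * MvPolynomial.C ((r/2 : ℝ):ℂ) := by
    intro r
    rw [← map_ofNat MvPolynomial.C 2, ← MvPolynomial.C_mul]
    congr 1
    push_cast
    ring
  rcases lt_trichotomy i j with hij | hij | hij <;> rcases lt_trichotomy k l with hkl | hkl | hkl
  · have h3 : ¬ (i = l ∧ j = k) := by rintro ⟨rfl, rfl⟩; exact absurd hij hkl.not_gt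
    simp only [DhP, hP, hij, hkl, dif_pos, if_neg h3]
    simp only [Derivation.smul_apply, Derivation.add_apply, Derivation.sub_apply, map_add, map_sub, Derivation.leibniz,
      MvPolynomial.pderiv_C, hX, hS, Sum.inr.injEq, Sum.inl.injEq, Subtype.mk.injEq, Prod.mk.injEq]
    simp only [reduceCtorEq, if_false, smul_eq_mul, smul_zero, mul_zero, add_zero, zero_add, sub_zero, zero_sub, map_zero]
    split_ifs
    · linear_combination MvPolynomial.C ((Jmat n W i j / 2 : ℝ):ℂ) * hI
    · ring
  · subst hkl
    have h3 : ¬ (i = k ∧ j = k) := by rintro ⟨rfl, rfl⟩; exact lt_irrefl _ hij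
    simp only [DhP, hP, hij, lt_irrefl, dif_pos, dif_neg, not_false_eq_true, if_neg h3]
    simp only [Derivation.smul_apply, Derivation.add_apply, Derivation.sub_apply, map_add, map_sub, Derivation.leibniz,
      MvPolynomial.pderiv_C, hX, hS, Sum.inr.injEq, Sum.inl.injEq, Subtype.mk.injEq, Prod.mk.injEq]
    simp only [reduceCtorEq, if_false, smul_eq_mul, smul_zero, mul_zero, add_zero, zero_add, sub_zero, zero_sub, map_zero]
  · skip
    simp only [DhP, hP, hij, hkl, hkl.not_gt, dif_pos, dif_neg, not_false_eq_true]
    simp only [Derivation.smul_apply, Derivation.add_apply, Derivation.sub_apply, map_add, map_sub, Derivation.leibniz,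
      MvPolynomial.pderiv_C, hX, hS, Sum.inr.injEq, Sum.inl.injEq, Subtype.mk.injEq, Prod.mk.injEq]
    simp only [reduceCtorEq, if_false, smul_eq_mul, smul_zero, mul_zero, add_zero, zero_add, sub_zero, zero_sub, map_zero]
    by_cases h4 : i = l ∧ j = k
    · obtain ⟨rfl, rfl⟩ := h4
      simp only [and_self, if_true]
      linear_combination - MvPolynomial.C ((Jmat n W i j / 2 : ℝ):ℂ) * hI - h2 (Jmat n W i j)
    · simp only [if_neg h4, if_neg (fun h : j = k ∧ i = l => h4 (And.comm.mp h))]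
      simp
  · subst hij
    have h3 : ¬ (i = l ∧ i = k) := by rintro ⟨rfl, rfl⟩; exact lt_irrefl _ hkl
    simp only [DhP, hP, hkl, lt_irrefl, dif_pos, dif_neg, not_false_eq_true, if_neg h3]
    simp only [Derivation.smul_apply, Derivation.add_apply, Derivation.sub_apply, map_add, map_sub, Derivation.leibniz,
      MvPolynomial.pderiv_C, hX, hS, Sum.inr.injEq, Sum.inl.injEq, Subtype.mk.injEq, Prod.mk.injEq]
    simp only [reduceCtorEq, if_false, smul_eq_mul, smul_zero, mul_zero, add_zero, zero_add, sub_zero, zero_sub, map_zero]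
  · subst hij hkl
    simp only [DhP, hP, lt_irrefl, dif_neg, not_false_eq_true, and_self]
    simp only [Derivation.smul_apply, Derivation.add_apply, Derivation.sub_apply, map_add, map_sub, Derivation.leibniz,
      MvPolynomial.pderiv_C, hX, hS, Sum.inr.injEq, Sum.inl.injEq, Subtype.mk.injEq, Prod.mk.injEq]
    try simp only [reduceCtorEq, if_false, smul_eq_mul, smul_zero, mul_zero, add_zero, zero_add, sub_zero, zero_sub, map_zero]
    split_ifs <;> simp
  · subst hij
    have h3 : ¬ (i = l ∧ i = k) := by rintro ⟨rfl, rfl⟩; exact lt_irrefl _ hkl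
    simp only [DhP, hP, hkl, hkl.not_gt, lt_irrefl, dif_pos, dif_neg, not_false_eq_true, if_neg h3]
    simp only [Derivation.smul_apply, Derivation.add_apply, Derivation.sub_apply, map_add, map_sub, Derivation.leibniz,
      MvPolynomial.pderiv_C, hX, hS, Sum.inr.injEq, Sum.inl.injEq, Subtype.mk.injEq, Prod.mk.injEq]
    simp only [reduceCtorEq, if_false, smul_eq_mul, smul_zero, mul_zero, add_zero, zero_add, sub_zero, zero_sub, map_zero]
  · rw [J_symm n W i j]
    simp only [DhP, hP, hij, hkl, hij.not_gt, dif_pos, dif_neg, not_false_eq_true]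
    simp only [Derivation.smul_apply, Derivation.add_apply, Derivation.sub_apply, map_add, map_sub, Derivation.leibniz,
      MvPolynomial.pderiv_C, hX, hS, Sum.inr.injEq, Sum.inl.injEq, Subtype.mk.injEq, Prod.mk.injEq]
    simp only [reduceCtorEq, if_false, smul_eq_mul, smul_zero, mul_zero, add_zero, zero_add, sub_zero, zero_sub, map_zero]
    by_cases h4 : i = l ∧ j = k
    · obtain ⟨rfl, rfl⟩ := h4
      simp only [and_self, if_true]
      linear_combination - MvPolynomial.C ((Jmat n W j i / 2 : ℝ):ℂ) * hI - h2 (Jmat n W j i)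
    · simp only [if_neg h4, if_neg (fun h : j = k ∧ i = l => h4 (And.comm.mp h))]
      simp
  · subst hkl
    have h3 : ¬ (i = k ∧ j = k) := by rintro ⟨rfl, rfl⟩; exact lt_irrefl _ hij
    simp only [DhP, hP, hij, hij.not_gt, lt_irrefl, dif_pos, dif_neg, not_false_eq_true, if_neg h3]
    simp only [Derivation.smul_apply, Derivation.add_apply, Derivation.sub_apply, map_add, map_sub, Derivation.leibniz,
      MvPolynomial.pderiv_C, hX, hS, Sum.inr.injEq, Sum.inl.injEq, Subtype.mk.injEq, Prod.mk.injEq]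
    simp only [reduceCtorEq, if_false, smul_eq_mul, smul_zero, mul_zero, add_zero, zero_add, sub_zero, zero_sub, map_zero]
  · have h3 : ¬ (i = l ∧ j = k) := by rintro ⟨rfl, rfl⟩; exact absurd hij hkl.not_gt
    simp only [DhP, hP, hij, hkl, hij.not_gt, hkl.not_gt, dif_pos, dif_neg, not_false_eq_true, if_neg h3]
    simp only [Derivation.smul_apply, Derivation.add_apply, Derivation.sub_apply, map_add, map_sub, Derivation.leibniz,
      MvPolynomial.pderiv_C, hX, hS, Sum.inr.injEq, Sum.inl.injEq, Subtype.mk.injEq, Prod.mk.injEq]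
    simp only [reduceCtorEq, if_false, smul_eq_mul, smul_zero, mul_zero, add_zero, zero_add, sub_zero, zero_sub, map_zero]
    split_ifs
    · linear_combination MvPolynomial.C ((Jmat n W j i / 2 : ℝ):ℂ) * hI
    · ring

theorem evR_hP (n : ℕ) (x : KH n → ℝ) (i j) : evR x (hP n i j) =
    bandH n (fun i => x (Sum.inl i))
      (fun q => (x (Sum.inr (Sum.inl q)), x (Sum.inr (Sum.inr q)))) i j := by
  unfold hP bandH evR
  simp only [Matrix.of_apply]
  split_ifs with h h'
  · apply Complex.ext <;> simp
  · apply Complex.ext <;> simp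
  · simp

noncomputable def MH (n : ℕ) (l : Fin 2 → ℂ) : Matrix (Fin (2*n+1) × Fin 2) (Fin (2*n+1) × Fin 2)
    (MvPolynomial (KH n) ℂ) :=
  Matrix.blockDiagonal fun a => (MvPolynomial.C (l a) : MvPolynomial (KH n) ℂ) •
    (1 : Matrix (Fin (2*n+1)) (Fin (2*n+1)) (MvPolynomial (KH n) ℂ)) -
    Matrix.of (hP n)

noncomputable def DMH (n : ℕ) (W : ℝ) (p q : Fin (2*n+1) × Fin 2) :
    Derivation ℂ (MvPolynomial (KH n) ℂ) (MvPolynomial (KH n) ℂ) :=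
  if p.2 = q.2 then - DhP n W p.1 q.1 else 0

noncomputable def M0H (n : ℕ) (l : Fin 2 → ℂ) (p q : Fin (2*n+1) × Fin 2) : ℂ :=
  if p = q then l p.2 else 0

noncomputable def C1H (n : ℕ) (W : ℝ) (p q r s : Fin (2*n+1) × Fin 2) : ℂ :=
  if (p.2 = q.2 ∧ r.2 = s.2) ∧ (p.1 = s.1 ∧ q.1 = r.1) then ((Jmat n W p.1 q.1 : ℝ) : ℂ) else 0

theorem MH_stein (n : ℕ) (W : ℝ) (hW : 0 < W) (l : Fin 2 → ℂ) (p q f) :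
    EH n W hW (MH n l p q * f) = M0H n l p q * EH n W hW f + EH n W hW (DMH n W p q f) := by
  obtain ⟨i, a⟩ := p
  obtain ⟨j, b⟩ := q
  simp only [MH, M0H, DMH, Matrix.blockDiagonal_apply, Prod.mk.injEq]
  by_cases hab : a = b
  · subst hab
    simp only [if_true, and_true, Matrix.sub_apply, Matrix.smul_apply, Matrix.of_apply, sub_mul, map_sub,
      EH_hP, Derivation.neg_apply, map_neg]
    by_cases hij : i = j
    · subst hij
      simp only [Matrix.one_apply_eq, smul_eq_mul, mul_one, MvPolynomial.C_mul', map_smul, if_true]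
      ring
    · simp [Matrix.one_apply_ne hij, hij]
  · simp [hab]

theorem DMH_MH (n : ℕ) (W : ℝ) (l : Fin 2 → ℂ) (p q r s) :
    DMH n W p q (MH n l r s) = algebraMap ℂ _ (C1H n W p q r s) := by
  obtain ⟨i, a⟩ := p
  obtain ⟨j, b⟩ := q
  obtain ⟨k, c⟩ := r
  obtain ⟨m, d⟩ := s
  simp only [MH, C1H, DMH, Matrix.blockDiagonal_apply]
  by_cases hab : a = b
  · by_cases hcd : c = d
    · simp only [hab, hcd, if_true, Derivation.neg_apply, Matrix.sub_apply, Matrix.smul_apply,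
        Matrix.of_apply, map_sub, DhP_hP, true_and]
      have : DhP n W i j ((MvPolynomial.C (l d) : MvPolynomial (KH n) ℂ) • (1 : Matrix (Fin (2*n+1)) (Fin (2*n+1))
          (MvPolynomial (KH n) ℂ)) k m) = 0 := by
        by_cases hk : k = m
        · subst hk
          rw [Matrix.one_apply_eq, smul_eq_mul, mul_one]
          exact (DhP n W i j).map_algebraMap (l d)
        · rw [Matrix.one_apply_ne hk, smul_zero, map_zero]
      rw [this, neg_zero, zero_sub, neg_neg, MvPolynomial.algebraMap_eq]
    · simp [hcd]
  · simp [hab]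

theorem MH_det (n : ℕ) (l : Fin 2 → ℂ) (x : KH n → ℝ) : evR x (MH n l).det =
    ∏ a, (l a • (1 : Matrix (Fin (2*n+1)) (Fin (2*n+1)) ℂ) - bandH n (fun i => x (Sum.inl i))
      (fun q => (x (Sum.inr (Sum.inl q)), x (Sum.inr (Sum.inr q))))).det := by
  rw [MH, Matrix.det_blockDiagonal]
  unfold evR
  rw [map_prod]
  apply Finset.prod_congr rfl
  intro a _
  rw [RingHom.map_det]
  congr 1
  ext i j
  have := evR_hP n x i j
  unfold evR at this
  simp only [RingHom.mapMatrix_apply, Matrix.map_apply, Matrix.sub_apply, Matrix.smul_apply, Matrix.of_apply,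
    map_sub, this]
  by_cases hij : i = j
  · subst hij; simp
  · simp [Matrix.one_apply_ne hij]

theorem F2_eq (n : ℕ) (W : ℝ) (hW : 0 < W) (l1 l2 : ℝ) :
    F2 n W l1 l2 = EH n W hW (MH n ![(l1:ℂ), (l2:ℂ)]).det := by
  change _ = ∫ x, evR x _ * wH n W x
  simp only [MH_det, wH, Fin.prod_univ_two, Matrix.cons_val_zero, Matrix.cons_val_one]
  unfold F2
  have m1 := volume_measurePreserving_sumPiEquivProdPi (fun _ : KH n => ℝ)
  have m2 := volume_measurePreserving_sumPiEquivProdPi (fun _ : QQ n ⊕ QQ n => ℝ)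
  have m3 := (volume_measurePreserving_arrowProdEquivProdArrow ℝ ℝ (QQ n)).symm
  have m4 := ((MeasurePreserving.id (volume : Measure (Fin (2*n+1) → ℝ))).prod (m3.comp m2)).comp m1
  have := m4.integral_comp' (f := ((MeasurableEquiv.sumPiEquivProdPi (fun _ : KH n => ℝ)).trans
    (MeasurableEquiv.prodCongr (MeasurableEquiv.refl _)
      ((MeasurableEquiv.sumPiEquivProdPi (fun _ : QQ n ⊕ QQ n => ℝ)).trans
        (MeasurableEquiv.arrowProdEquivProdArrow ℝ ℝ (QQ n)).symm))))
      (fun ω : (Fin (2*n+1) → ℝ) × (QQ n → ℝ × ℝ) => ((bandDens n W ω.1 ω.2 : ℝ) : ℂ) *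
      ((l1 : ℂ) • (1 : Matrix (Fin (2*n+1)) (Fin (2*n+1)) ℂ) - bandH n ω.1 ω.2).det *
      ((l2 : ℂ) • (1 : Matrix (Fin (2*n+1)) (Fin (2*n+1)) ℂ) - bandH n ω.1 ω.2).det)
  refine this.symm.trans ?_
  congr 1
  funext x
  rw [mul_assoc, mul_comm]
  rfl

abbrev KX (n : ℕ) := Fin (2*n+1) × Fin 4

noncomputable def qX (n : ℕ) (W : ℝ) (ℓ : Fin 4 → ℂ) : MvPolynomial (KX n) ℂ :=
  -(∑ c, ∑ j, ∑ k, MvPolynomial.C ((Minv n W j k : ℝ) : ℂ) * (MvPolynomial.X (j, c) * MvPolynomial.X (k, c)))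
    + ∑ c, ∑ j, MvPolynomial.C (ℓ c) * MvPolynomial.X (j, c)

noncomputable def wX (n : ℕ) (W : ℝ) (ℓ : Fin 4 → ℂ) (x : KX n → ℝ) : ℂ :=
  1 * Complex.exp (evR x (qX n W ℓ))

theorem evR_qX (n : ℕ) (W : ℝ) (ℓ : Fin 4 → ℂ) (x : KX n → ℝ) : evR x (qX n W ℓ) =
    -((∑ c, ∑ j, ∑ k, Minv n W j k * x (j, c) * x (k, c) : ℝ) : ℂ) +
      ∑ c, ∑ j, ℓ c * ((x (j, c) : ℝ) : ℂ) := by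
  simp only [evR, qX, map_add, map_neg, map_sum, map_mul, MvPolynomial.eval_C, MvPolynomial.eval_X]
  push_cast
  simp only [mul_assoc]

theorem pderiv_qX (n : ℕ) (W : ℝ) (ℓ : Fin 4 → ℂ) (j : Fin (2*n+1)) (c : Fin 4) :
    MvPolynomial.pderiv (j, c) (qX n W ℓ) =
      -(2 * ∑ k, MvPolynomial.C ((Minv n W j k : ℝ) : ℂ) * MvPolynomial.X (k, c)) +
        MvPolynomial.C (ℓ c) := by
  have hX : ∀ a b : KX n, MvPolynomial.pderiv a (MvPolynomial.X b : MvPolynomial (KX n) ℂ) =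
      if b = a then 1 else 0 := by
    intro a b
    split_ifs with h
    · rw [h, MvPolynomial.pderiv_X_self]
    · exact MvPolynomial.pderiv_X_of_ne h
  have hS : ∀ (a : ℂ) (p : MvPolynomial (KX n) ℂ), a • p = MvPolynomial.C a * p :=
    fun c p => (MvPolynomial.C_mul').symm
  rw [qX, map_add, map_neg]
  congr 1
  · congr 1
    simp only [map_sum, Derivation.leibniz, MvPolynomial.pderiv_C, smul_zero, add_zero, hX, smul_eq_mul, hS,
      Prod.mk.injEq, mul_add, Finset.sum_add_distrib]
    rw [show (∑ x : Fin 4, ∑ x_1 : Fin (2*n+1), ∑ x_2 : Fin (2*n+1), MvPolynomial.X (x_1, x) * MvPolynomial.X (x_2, x) * (0 : MvPolynomial (KX n) ℂ)) = 0 by simp, add_zero]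
    refine Eq.trans ?_ (two_mul _).symm
    congr 1
    · rw [Finset.sum_eq_single c]
      · rw [Finset.sum_comm]
        simp only [and_true, mul_ite, mul_one, mul_zero]
        rw [Finset.sum_eq_single j]
        · simp
          exact Finset.sum_congr rfl fun k _ => by rw [Minv_symm]
        · intro b _ hb; simp [hb]
        · simp
      · intro b _ hb
        simp [hb]
      · simp
    · rw [Finset.sum_eq_single c]
      · simp only [and_true, mul_ite, mul_one, mul_zero]
        rw [Finset.sum_eq_single j]
        · simp
        · intro b _ hb; simp [hb]
        · simp
      · intro b _ hb
        simp [hb]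
      · simp
  · simp only [map_sum, Derivation.leibniz, MvPolynomial.pderiv_C, smul_zero, add_zero, hX, smul_eq_mul,
      Prod.mk.injEq]
    rw [Finset.sum_eq_single c]
    · simp
    · intro b _ hb
      simp [hb]
    · simp

theorem wX_int (n : ℕ) (W : ℝ) (ℓ : Fin 4 → ℂ) (hl : ∀ c, (ℓ c).re = 0) (p : MvPolynomial (KX n) ℂ) :
    Integrable (fun x => evR x p * wX n W ℓ x) := by
  refine integrable_poly_gauss (wX n W ℓ) ?_ 1 1 one_pos ?_ p
  · exact continuous_const.mul (Complex.continuous_exp.comp (continuous_evR _))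
  · intro x
    rw [wX, one_mul, one_mul, Complex.norm_exp, evR_qX]
    apply Real.exp_le_exp.mpr
    rw [Complex.add_re, Complex.neg_re, Complex.ofReal_re]
    have h0 : (∑ c, ∑ j, ℓ c * ((x (j, c) : ℝ) : ℂ)).re = 0 := by
      simp [Complex.re_sum, hl]
    rw [h0, add_zero, neg_mul, one_mul, neg_le_neg_iff, Fintype.sum_prod_type, Finset.sum_comm]
    exact Finset.sum_le_sum fun c _ => Minv_quad_ge n W (fun j => x (j, c))

noncomputable def EX (n : ℕ) (W : ℝ) (ℓ : Fin 4 → ℂ) (hl : ∀ c, (ℓ c).re = 0) :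
    MvPolynomial (KX n) ℂ →ₗ[ℂ] ℂ := gE (wX n W ℓ) (wX_int n W ℓ hl)

theorem EX_stein (n : ℕ) (W : ℝ) (ℓ : Fin 4 → ℂ) (hl : ∀ c, (ℓ c).re = 0) (i : Fin (2*n+1)) (c : Fin 4) (p) :
    EX n W ℓ hl (MvPolynomial.X (i, c) * p) = ℓ c / 2 * EX n W ℓ hl p +
      ∑ j, ((Jmat n W i j / 2 : ℝ) : ℂ) * EX n W ℓ hl (MvPolynomial.pderiv (j, c) p) := by
  have h : ∀ j, EX n W ℓ hl (MvPolynomial.pderiv (j, c) p) =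
      - EX n W ℓ hl (MvPolynomial.pderiv (j, c) (qX n W ℓ) * p) := fun j =>
    stein_aux (wX n W ℓ) (fun k => MvPolynomial.pderiv k (qX n W ℓ)) (wX_int n W ℓ hl)
      (fun k x => expw_lineDeriv _ _ k x) (j, c) p
  have h' : ∀ j, EX n W ℓ hl (MvPolynomial.pderiv (j, c) p) =
      2 * ∑ k, ((Minv n W j k : ℝ) : ℂ) * EX n W ℓ hl (MvPolynomial.X (k, c) * p) - ℓ c * EX n W ℓ hl p := by
    intro j
    have e : MvPolynomial.pderiv (j, c) (qX n W ℓ) * p =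
        -((2 : ℂ) • ∑ k, ((Minv n W j k : ℝ) : ℂ) • (MvPolynomial.X (k, c) * p)) + ℓ c • p := by
      rw [pderiv_qX, add_mul, neg_mul, mul_assoc, Finset.sum_mul, ← MvPolynomial.C_mul' (a := ℓ c),
        ← MvPolynomial.C_mul' (a := (2:ℂ)), map_ofNat MvPolynomial.C 2]
      congr 4
      funext k
      rw [mul_assoc, MvPolynomial.C_mul']
    rw [h j, e]
    simp only [map_add, map_neg, map_smul, map_sum, smul_eq_mul]
    ring
  simp only [h']
  have hJ : ∑ j, ((Jmat n W i j : ℝ) : ℂ) = 1 := by exact_mod_cast J_rowsum n W i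
  have hM : ∀ k, ∑ j, ((Jmat n W i j : ℝ) : ℂ) * ((Minv n W j k : ℝ) : ℂ) = if i = k then 1 else 0 := by
    intro k
    have := congrFun (congrFun (J_mul_Minv n W) i) k
    rw [Matrix.mul_apply, Matrix.one_apply] at this
    have h2 := congrArg (fun r : ℝ => (r : ℂ)) this
    push_cast at h2
    rw [h2]
    split_ifs <;> simp
  calc EX n W ℓ hl (MvPolynomial.X (i, c) * p)
      = ∑ k, (if i = k then 1 else 0) * EX n W ℓ hl (MvPolynomial.X (k, c) * p) := by simp
    _ = ∑ j, ((Jmat n W i j : ℝ) : ℂ) *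
          ∑ k, ((Minv n W j k : ℝ) : ℂ) * EX n W ℓ hl (MvPolynomial.X (k, c) * p) := by
        simp only [← hM, Finset.sum_mul, Finset.mul_sum]
        rw [Finset.sum_comm]
        simp only [mul_assoc]
    _ = _ := by
        have : ∀ (a b : ℂ), b = ℓ c / 2 * EX n W ℓ hl p * 1 + (b - ℓ c / 2 * EX n W ℓ hl p * 1) := by
          intros; ring
        rw [this 0 (∑ j, _), ← hJ]
        congr 1
        · rw [hJ, mul_one]
        rw [Finset.mul_sum, ← Finset.sum_sub_distrib]
        apply Finset.sum_congr rfl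
        intro j _
        push_cast
        ring

open scoped MatrixOrder in
theorem wX_total (n : ℕ) (W : ℝ) (ℓ : Fin 4 → ℂ) :
    ∫ x, wX n W ℓ x = (Real.pi : ℂ)^(2*(2*n+1)) * (((Jmat n W).det : ℝ) : ℂ)^2 *
      Complex.exp ((2*n+1) * (∑ c, (ℓ c)^2) / 4) := by
  obtain ⟨B, hB⟩ : ∃ B : Matrix (Fin (2*n+1)) (Fin (2*n+1)) ℝ, Minv n W = B.transpose * B := by
    obtain ⟨B, hB⟩ := CStarAlgebra.nonneg_iff_eq_star_mul_self.mp (Minv_posDef n W).posSemidef.nonneg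
    exact ⟨B, by rw [hB, Matrix.star_eq_conjTranspose, Matrix.conjTranspose_eq_transpose_of_trivial]⟩
  have hdet : (Minv n W).det = B.det^2 := by rw [hB, Matrix.det_mul, Matrix.det_transpose, sq]
  have hB0 : B.det ≠ 0 := by
    intro h; have := (Minv_posDef n W).det_pos; rw [hdet, h] at this; simp at this
  set BB : Matrix (KX n) (KX n) ℝ := Matrix.kroneckerMap (· * ·) B (1 : Matrix (Fin 4) (Fin 4) ℝ) with hBB
  have hBBdet : BB.det = B.det^4 := by rw [hBB, Matrix.det_kronecker]; simp
  have hmv : ∀ (x : KX n → ℝ) j c, (BB.mulVec x) (j, c) = ∑ k, B j k * x (k, c) := by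
    intro x j c
    simp [hBB, Matrix.mulVec, dotProduct, Fintype.sum_prod_type, Matrix.one_apply]
  have hM : ∀ j k, ∑ i, B i j * B i k = Minv n W j k := by
    intro j k; rw [hB, Matrix.mul_apply]; rfl
  have hM1 : ∀ k, ∑ i, (∑ j, B i j) * B i k = 1 := by
    intro k
    simp only [Finset.sum_mul]
    rw [Finset.sum_comm]
    simp only [hM]
    simp only [Minv_symm n W _ k, Minv_rowsum]
  have hM2 : ∑ i, (∑ j, B i j)^2 = 2*n+1 := by
    have : ∀ i, (∑ j, B i j)^2 = ∑ k, (∑ j, B i j) * B i k := by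
      intro i; rw [sq, Finset.mul_sum]
    simp only [this]
    rw [Finset.sum_comm]
    simp [hM1]
  have key := gauss_int_general BB (by rw [hBBdet]; positivity) (fun q : KX n => ℓ q.2 * ((∑ j, B q.1 j : ℝ) : ℂ))
  have e1 : ∀ x : KX n → ℝ, wX n W ℓ x = Complex.exp (-∑ k, (((BB.mulVec x) k : ℝ) : ℂ)^2 +
      ∑ q : KX n, ℓ q.2 * ((∑ j, B q.1 j : ℝ) : ℂ) * (((BB.mulVec x) q : ℝ) : ℂ)) := by
    intro x
    rw [wX, one_mul, evR_qX]
    congr 2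
    · congr 1
      rw [Fintype.sum_prod_type_right]
      push_cast
      apply Finset.sum_congr rfl
      intro c _
      simp only [hmv]
      have : ∑ j, ∑ k, Minv n W j k * x (j, c) * x (k, c) = ∑ i, (∑ k, B i k * x (k, c))^2 := by
        simp only [← hM, sq, Finset.sum_mul, Finset.mul_sum]
        refine Eq.trans ?_ Finset.sum_comm
        rw [Finset.sum_comm]
        refine Finset.sum_congr rfl fun k _ => ?_
        rw [Finset.sum_comm]
        refine Finset.sum_congr rfl fun j _ => Finset.sum_congr rfl fun i _ => ?_
        ring
      have h2 := congrArg (fun r : ℝ => (r : ℂ)) this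
      push_cast at h2
      push_cast
      exact h2
    · rw [Fintype.sum_prod_type_right]
      refine Finset.sum_congr rfl fun c _ => ?_
      simp only [hmv, mul_assoc, ← Finset.mul_sum]
      congr 1
      rw [← Complex.ofReal_sum]
      simp only [← Complex.ofReal_mul]
      rw [← Complex.ofReal_sum]
      congr 1
      simp only [Finset.mul_sum]
      rw [Finset.sum_comm]
      refine Finset.sum_congr rfl fun k _ => ?_
      simp only [← mul_assoc]
      rw [← Finset.sum_mul, hM1, one_mul]
  simp only [e1]
  rw [key]
  have h3 : ∑ q : KX n, (ℓ q.2 * ((∑ j, B q.1 j : ℝ) : ℂ))^2 = (2*n+1) * ∑ c, (ℓ c)^2 := by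
    rw [Fintype.sum_prod_type_right]
    simp only [mul_pow, ← Finset.mul_sum]
    rw [← Finset.sum_mul]
    have h2 := congrArg (fun r : ℝ => (r : ℂ)) hM2
    push_cast at h2
    push_cast
    rw [h2, mul_comm]
  rw [h3, hBBdet, J_det, hdet]
  have h4 : (Real.pi : ℂ)^((Fintype.card (KX n) : ℂ) / 2) = (Real.pi : ℂ)^(2*(2*n+1)) := by
    rw [← Complex.cpow_natCast]
    congr 1
    simp
    ring
  rw [h4]
  have h5 : |B.det ^ 4|⁻¹ = ((B.det^2)⁻¹)^2 := by
    rw [abs_of_nonneg (by positivity)]; field_simp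
  rw [h5]
  push_cast
  ring

noncomputable def sig : Fin 4 → Matrix (Fin 2) (Fin 2) ℂ :=
  ![!![1, 0; 0, 1], !![0, 1; 1, 0], !![0, -Complex.I; Complex.I, 0], !![1, 0; 0, -1]]

theorem sig_complete (a a' b b' : Fin 2) :
    ∑ c, sig c a a' * sig c b b' = if a = b' ∧ a' = b then 2 else 0 := by
  rw [Fin.sum_univ_four]
  fin_cases a <;> fin_cases a' <;> fin_cases b <;> fin_cases b' <;> simp [sig] <;> norm_num

noncomputable def MXb (n : ℕ) (t : ℂ) (j : Fin (2*n+1)) : Matrix (Fin 2) (Fin 2) (MvPolynomial (KX n) ℂ) :=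
  Matrix.of fun a b => MvPolynomial.C (if a = b then t else 0) +
    ∑ c, MvPolynomial.C (Complex.I * sig c a b) * MvPolynomial.X (j, c)

noncomputable def MX (n : ℕ) (t : ℂ) : Matrix (Fin (2*n+1) × Fin 2) (Fin (2*n+1) × Fin 2)
    (MvPolynomial (KX n) ℂ) :=
  (Matrix.blockDiagonal (MXb n t)).submatrix (Equiv.prodComm _ _) (Equiv.prodComm _ _)

theorem MX_apply (n t i a j b) : MX n t (i, a) (j, b) = if i = j then MXb n t i a b else 0 := by
  simp [MX, Matrix.blockDiagonal_apply]

noncomputable def DMX (n : ℕ) (W : ℝ) (p q : Fin (2*n+1) × Fin 2) :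
    Derivation ℂ (MvPolynomial (KX n) ℂ) (MvPolynomial (KX n) ℂ) :=
  if p.1 = q.1 then ∑ c, ∑ k, (Complex.I * sig c p.2 q.2 * ((Jmat n W p.1 k / 2 : ℝ) : ℂ)) •
    MvPolynomial.pderiv (k, c) else 0

noncomputable def C2X (n : ℕ) (W : ℝ) (p q r s : Fin (2*n+1) × Fin 2) : ℂ :=
  if (p.1 = q.1 ∧ r.1 = s.1) ∧ (p.2 = s.2 ∧ q.2 = r.2) then -((Jmat n W p.1 r.1 : ℝ) : ℂ) else 0

noncomputable def ell (s : Fin 2 → ℂ) : Fin 4 → ℂ :=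
  ![-Complex.I * (s 0 + s 1), 0, 0, -Complex.I * (s 0 - s 1)]

theorem deriv_sum_apply {n : ℕ} {ι : Type*} (s : Finset ι)
    (D : ι → Derivation ℂ (MvPolynomial (KX n) ℂ) (MvPolynomial (KX n) ℂ)) (f) :
    (∑ i ∈ s, D i) f = ∑ i ∈ s, D i f := by
  classical
  induction s using Finset.induction_on with
  | empty => simp
  | insert a s ha ih => simp [Finset.sum_insert ha, ih]

theorem MX_stein (n : ℕ) (W : ℝ) (t : ℂ) (s : Fin 2 → ℂ) (hl : ∀ c, (ell s c).re = 0) (p q f) :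
    EX n W (ell s) hl (MX n t p q * f) = M0H n (fun a => t + s a) p q * EX n W (ell s) hl f +
      EX n W (ell s) hl (DMX n W p q f) := by
  obtain ⟨i, a⟩ := p
  obtain ⟨j, b⟩ := q
  rw [MX_apply]
  simp only [M0H, DMX, Prod.mk.injEq]
  by_cases hij : i = j
  · subst hij
    simp only [if_true, true_and, MXb, Matrix.of_apply, add_mul, Finset.sum_mul, map_add, map_sum,
      deriv_sum_apply, Derivation.smul_apply, MvPolynomial.C_mul', smul_mul_assoc, map_smul, EX_stein,
      smul_eq_mul, mul_add, Finset.mul_sum, Finset.sum_add_distrib, ← add_assoc]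
    refine congrArg₂ (· + ·) ?_ (Finset.sum_congr rfl fun x _ => Finset.sum_congr rfl fun y _ => by ring)
    rw [Fin.sum_univ_four]
    fin_cases a <;> fin_cases b <;> simp [sig, ell] <;> ring_nf <;> simp <;> ring
  · simp [hij]

theorem DMX_MX (n : ℕ) (W : ℝ) (t : ℂ) (p q r s) :
    DMX n W p q (MX n t r s) = algebraMap ℂ _ (C2X n W p q r s) := by
  have hX : ∀ a b : KX n, MvPolynomial.pderiv a (MvPolynomial.X b : MvPolynomial (KX n) ℂ) =
      if b = a then 1 else 0 := by
    intro a b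
    split_ifs with h
    · rw [h, MvPolynomial.pderiv_X_self]
    · exact MvPolynomial.pderiv_X_of_ne h
  obtain ⟨i, a⟩ := p
  obtain ⟨j, b⟩ := q
  obtain ⟨k, c⟩ := r
  obtain ⟨m, d⟩ := s
  rw [MX_apply]
  simp only [DMX, C2X]
  by_cases hij : i = j
  · by_cases hkm : k = m
    · have e : ∀ (x : Fin 4) (l : Fin (2*n+1)), MvPolynomial.pderiv (l, x) (MXb n t k c d) =
          if l = k then MvPolynomial.C (Complex.I * sig x c d) else 0 := by
        intro x l
        simp only [MXb, Matrix.of_apply, map_add, map_sum, Derivation.leibniz, MvPolynomial.pderiv_C,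
          hX, smul_zero, add_zero, zero_add, Prod.mk.injEq, smul_eq_mul]
        by_cases hl : l = k
        · simp [hl]
        · simp [hl, Ne.symm hl, fun h => hl (Eq.symm h)]
      simp only [hij, hkm, if_true, deriv_sum_apply, Derivation.smul_apply, true_and] at e ⊢
      simp only [e, smul_ite, smul_zero, Finset.sum_ite_eq', Finset.mem_univ, if_true,
        MvPolynomial.algebraMap_eq, MvPolynomial.smul_eq_C_mul, ← MvPolynomial.C_mul]
      rw [← map_sum]
      congr 1
      have := sig_complete a b c d
      calc ∑ x, Complex.I * sig x a b * ((Jmat n W j m / 2 : ℝ) : ℂ) * (Complex.I * sig x c d)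
          = (Complex.I * Complex.I) * ((Jmat n W j m / 2 : ℝ) : ℂ) * ∑ x, sig x a b * sig x c d := by
            rw [Finset.mul_sum]
            exact Finset.sum_congr rfl fun x _ => by ring
        _ = _ := by
            rw [this, Complex.I_mul_I]
            split_ifs
            · push_cast; ring
            · simp
    · simp [hkm]
  · simp [hij]

noncomputable def Ymat (y : Fin 4 → ℝ) : Matrix (Fin 2) (Fin 2) ℂ := ∑ c, ((y c : ℝ) : ℂ) • sig c

theorem MX_det (n : ℕ) (t : ℂ) (x : KX n → ℝ) : evR x (MX n t).det =
    ∏ j, (t • (1 : Matrix (Fin 2) (Fin 2) ℂ) + Complex.I • Ymat (fun c => x (j, c))).det := by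
  rw [MX, Matrix.det_submatrix_equiv_self, Matrix.det_blockDiagonal]
  unfold evR
  rw [map_prod]
  apply Finset.prod_congr rfl
  intro j _
  rw [RingHom.map_det]
  congr 1
  ext a b
  simp only [MXb, RingHom.mapMatrix_apply, Matrix.map_apply, Matrix.of_apply, map_add, map_sum, map_mul,
    MvPolynomial.eval_C, MvPolynomial.eval_X, Matrix.add_apply, Matrix.smul_apply, Ymat, Matrix.sum_apply,
    smul_eq_mul, Finset.mul_sum, Matrix.one_apply]
  congr 1
  · split_ifs <;> simp
  · exact Finset.sum_congr rfl fun x _ => by ring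

theorem F2_X (n : ℕ) (W : ℝ) (hW : 0 < W) (l1 l2 t : ℝ) :
    F2 n W l1 l2 = (∫ x, wX n W (ell ![((l1 - t : ℝ) : ℂ), ((l2 - t : ℝ) : ℂ)]) x)⁻¹ *
      ∫ x : KX n → ℝ, (∏ j, ((t : ℂ) • (1 : Matrix (Fin 2) (Fin 2) ℂ) +
        Complex.I • Ymat (fun c => x (j, c))).det) *
        wX n W (ell ![((l1 - t : ℝ) : ℂ), ((l2 - t : ℝ) : ℂ)]) x := by
  set s : Fin 2 → ℂ := ![((l1 - t : ℝ) : ℂ), ((l2 - t : ℝ) : ℂ)] with hs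
  have hl : ∀ c, (ell s c).re = 0 := by
    intro c
    fin_cases c <;> simp [ell, hs]
  set Z := ∫ x, wX n W (ell s) x with hZ
  have hZ0 : Z ≠ 0 := by
    rw [hZ, wX_total]
    have h1 : (Real.pi : ℂ) ≠ 0 := by exact_mod_cast Real.pi_ne_zero
    have h2 : (((Jmat n W).det : ℝ) : ℂ) ≠ 0 := by
      rw [J_det]
      exact_mod_cast inv_ne_zero (Minv_posDef n W).det_pos.ne'
    exact mul_ne_zero (mul_ne_zero (pow_ne_zero _ h1) (pow_ne_zero _ h2)) (Complex.exp_ne_zero _)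
  have hls : (fun a => (t:ℂ) + s a) = ![(l1:ℂ), (l2:ℂ)] := by
    funext a; fin_cases a <;> simp [hs]
  have key := gauss_duality (EH n W hW) (Z⁻¹ • EX n W (ell s) hl) (MH n ![(l1:ℂ), (l2:ℂ)]) (DMH n W)
    (MX n t) (DMX n W) (M0H n ![(l1:ℂ), (l2:ℂ)]) (C1H n W) (C2X n W)
    (MH_stein n W hW _) (DMH_MH n W _)
    (by
      intro p q f
      simp only [LinearMap.smul_apply, smul_eq_mul, MX_stein, hls]
      ring)
    (DMX_MX n W t)
    (by
      intro p q r s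
      simp only [C1H, C2X]
      by_cases h : (p.2 = q.2 ∧ r.2 = s.2) ∧ (p.1 = s.1 ∧ q.1 = r.1)
      · rw [if_pos h, if_pos ⟨⟨h.2.1, h.2.2.symm⟩, h.1.1, h.1.2.symm⟩, h.2.2, neg_neg]
      · rw [if_neg h, if_neg (fun h2 => h ⟨⟨h2.2.1, h2.2.2.symm⟩, h2.1.1, h2.1.2.symm⟩), neg_zero])
    (by
      rw [EH_one, LinearMap.smul_apply, smul_eq_mul]
      have : EX n W (ell s) hl 1 = Z := by
        change ∫ x, evR x 1 * wX n W (ell s) x = Z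
        simp [evR, hZ]
      rw [this, inv_mul_cancel₀ hZ0])
    _ (Fintype.equivFin (Fin (2*n+1) × Fin 2)).symm (Fintype.equivFin (Fin (2*n+1) × Fin 2)).symm
  rw [Matrix.det_submatrix_equiv_self, Matrix.det_submatrix_equiv_self] at key
  rw [F2_eq n W hW, key, LinearMap.smul_apply, smul_eq_mul]
  congr 1
  change ∫ x, evR x _ * wX n W (ell s) x = _
  simp only [MX_det]

abbrev U2 := Matrix.unitaryGroup (Fin 2) ℂ

noncomputable def cvec (M : Matrix (Fin 2) (Fin 2) ℂ) : Fin 4 → ℝ := fun c => (sig c * M).trace.re / 2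

theorem Ymat_eq (y : Fin 4 → ℝ) : Ymat y = !![(y 0 : ℂ) + y 3, y 1 - Complex.I * y 2;
    y 1 + Complex.I * y 2, (y 0 : ℂ) - y 3] := by
  ext a b
  rw [Ymat, Matrix.sum_apply, Fin.sum_univ_four]
  fin_cases a <;> fin_cases b <;> simp [sig] <;> ring

theorem cvec_Ymat (y : Fin 4 → ℝ) : cvec (Ymat y) = y := by
  funext c
  rw [Ymat_eq, cvec]
  fin_cases c <;> simp [sig, Matrix.trace, Fin.sum_univ_two, Matrix.mul_apply] <;> ring

theorem Ymat_herm (y : Fin 4 → ℝ) : (Ymat y).IsHermitian := by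
  rw [Ymat_eq, Matrix.IsHermitian]
  ext a b
  fin_cases a <;> fin_cases b <;> simp [Matrix.conjTranspose_apply] <;> ring

theorem Ymat_cvec (M : Matrix (Fin 2) (Fin 2) ℂ) (hM : M.IsHermitian) : Ymat (cvec M) = M := by
  have h00 : (M 0 0).im = 0 := by
    have := congrArg Complex.im (hM.apply 0 0); simp at this; linarith
  have h11 : (M 1 1).im = 0 := by
    have := congrArg Complex.im (hM.apply 1 1); simp at this; linarith
  have h01 := hM.apply 0 1
  have h01r := congrArg Complex.re h01
  have h01i := congrArg Complex.im h01
  simp at h01r h01i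
  rw [Ymat_eq]
  ext a b
  fin_cases a <;> fin_cases b <;> apply Complex.ext <;>
    simp [cvec, sig, Matrix.trace, Fin.sum_univ_two, Matrix.mul_apply, Matrix.vecMul, dotProduct] <;> linarith

theorem Ymat_sq_trace (y : Fin 4 → ℝ) : ((Ymat y)^2).trace = 2 * ∑ c, ((y c : ℝ) : ℂ)^2 := by
  rw [Ymat_eq, sq, Fin.sum_univ_four]
  simp [Matrix.trace, Fin.sum_univ_two, Matrix.mul_apply]
  ring_nf
  simp

theorem Ymat_trace (y : Fin 4 → ℝ) : (Ymat y).trace = 2 * y 0 := by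
  rw [Ymat_eq]
  simp [Matrix.trace, Fin.sum_univ_two]
  ring

theorem Ymat_add (y z : Fin 4 → ℝ) : Ymat (y + z) = Ymat y + Ymat z := by
  simp [Ymat, add_smul, Finset.sum_add_distrib]

theorem Ymat_sub (y z : Fin 4 → ℝ) : Ymat (y - z) = Ymat y - Ymat z := by
  simp [Ymat, sub_smul, Finset.sum_sub_distrib]

theorem Ymat_smul (r : ℝ) (z : Fin 4 → ℝ) : Ymat (r • z) = (r : ℂ) • Ymat z := by
  simp [Ymat, mul_smul, Finset.smul_sum]

noncomputable def RU (U : U2) (y : Fin 4 → ℝ) : Fin 4 → ℝ :=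
  cvec (star (U : Matrix (Fin 2) (Fin 2) ℂ) * Ymat y * (U : Matrix (Fin 2) (Fin 2) ℂ))

theorem herm_conj (U : Matrix (Fin 2) (Fin 2) ℂ) {A : Matrix (Fin 2) (Fin 2) ℂ} (hA : A.IsHermitian) :
    (star U * A * U).IsHermitian := by
  rw [Matrix.star_eq_conjTranspose]
  exact Matrix.isHermitian_conjTranspose_mul_mul _ hA

theorem Ymat_RU (U : U2) (y) : Ymat (RU U y) =
    star (U : Matrix (Fin 2) (Fin 2) ℂ) * Ymat y * (U : Matrix (Fin 2) (Fin 2) ℂ) :=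
  Ymat_cvec _ (herm_conj _ (Ymat_herm y))

theorem Ymat_inj {y z : Fin 4 → ℝ} (h : Ymat y = Ymat z) : y = z := by
  rw [← cvec_Ymat y, h, cvec_Ymat]

theorem RU_mul (V U : U2) (y) : RU U (RU V y) = RU (V * U) y := by
  apply Ymat_inj
  rw [Ymat_RU, Ymat_RU, Ymat_RU]
  simp [mul_assoc]

theorem Ustar (U : U2) : (U : Matrix (Fin 2) (Fin 2) ℂ) * star (U : Matrix (Fin 2) (Fin 2) ℂ) = 1 :=
  Unitary.mul_star_self_of_mem U.2

theorem starU (U : U2) : star (U : Matrix (Fin 2) (Fin 2) ℂ) * (U : Matrix (Fin 2) (Fin 2) ℂ) = 1 :=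
  Unitary.star_mul_self_of_mem U.2

theorem trace_conj (U : U2) (A : Matrix (Fin 2) (Fin 2) ℂ) :
    (star (U : Matrix (Fin 2) (Fin 2) ℂ) * A * (U : Matrix (Fin 2) (Fin 2) ℂ)).trace = A.trace := by
  rw [Matrix.trace_mul_comm, ← mul_assoc, Ustar, one_mul]

theorem conj_sq (U : U2) (A : Matrix (Fin 2) (Fin 2) ℂ) :
    (star (U : Matrix (Fin 2) (Fin 2) ℂ) * A * (U : Matrix (Fin 2) (Fin 2) ℂ))^2 =
    star (U : Matrix (Fin 2) (Fin 2) ℂ) * A^2 * (U : Matrix (Fin 2) (Fin 2) ℂ) := by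
  rw [sq, sq]
  calc _ = star (U : Matrix (Fin 2) (Fin 2) ℂ) * A * ((U : Matrix (Fin 2) (Fin 2) ℂ) *
    star (U : Matrix (Fin 2) (Fin 2) ℂ)) * A * (U : Matrix (Fin 2) (Fin 2) ℂ) := by simp only [mul_assoc]
   _ = _ := by rw [Ustar]; simp only [mul_assoc, one_mul, mul_one]

theorem RU_zero (U : U2) (y) : RU U y 0 = y 0 := by
  have := Ymat_trace (RU U y)
  rw [Ymat_RU, trace_conj, Ymat_trace] at this
  have h2 : (y 0 : ℂ) = RU U y 0 := mul_left_cancel₀ two_ne_zero this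
  exact_mod_cast h2.symm

theorem RU_sq (U : U2) (y) : ∑ c, (RU U y c)^2 = ∑ c, (y c)^2 := by
  have := Ymat_sq_trace (RU U y)
  rw [Ymat_RU, conj_sq, trace_conj, Ymat_sq_trace] at this
  have h2 := mul_left_cancel₀ two_ne_zero this
  exact_mod_cast h2.symm

noncomputable def RUlin (U : U2) : EuclideanSpace ℝ (Fin 4) →ₗᵢ[ℝ] EuclideanSpace ℝ (Fin 4) where
  toFun y := WithLp.toLp 2 (RU U y.ofLp)
  map_add' y z := by
    refine congrArg (WithLp.toLp 2) (Ymat_inj ?_)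
    simp [Ymat_add, Ymat_RU, mul_add, add_mul]
  map_smul' r y := by
    refine congrArg (WithLp.toLp 2) (Ymat_inj ?_)
    simp [Ymat_smul, Ymat_RU]
  norm_map' y := by
    rw [EuclideanSpace.norm_eq, EuclideanSpace.norm_eq]
    congr 1
    simp only [Real.norm_eq_abs, sq_abs]
    exact RU_sq U y.ofLp

theorem RU_mp (U : U2) : MeasurePreserving (RU U) := by
  have h := ((RUlin U).toLinearIsometryEquiv rfl).measurePreserving
  have h1 := PiLp.volume_preserving_toLp (Fin 4)
  have h2 := PiLp.volume_preserving_ofLp (Fin 4)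
  exact (h2.comp h).comp h1

noncomputable def dv (t u : ℝ) : Fin 4 → ℝ := ![t, 0, 0, u]

theorem Ymat_dv (t u : ℝ) : Ymat (dv t u) = Matrix.diagonal ![((t + u : ℝ) : ℂ), ((t - u : ℝ) : ℂ)] := by
  rw [Ymat_eq]
  ext a b
  fin_cases a <;> fin_cases b <;> simp [dv]

noncomputable def swapU : U2 := ⟨!![0, 1; 1, 0], by
  rw [Matrix.mem_unitaryGroup_iff]
  ext a b
  fin_cases a <;> fin_cases b <;> simp [Matrix.mul_apply, Fin.sum_univ_two, Matrix.star_apply]⟩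

theorem RU_swap (t u : ℝ) : RU swapU (dv t u) = dv t (-u) := by
  apply Ymat_inj
  rw [Ymat_RU, Ymat_dv, Ymat_dv]
  ext a b
  fin_cases a <;> fin_cases b <;>
    simp [swapU, Matrix.mul_apply, Fin.sum_univ_two, Matrix.star_apply, Matrix.diagonal] ; try ring

theorem RU_diag (y : Fin 4 → ℝ) : ∃ V, RU V y = dv (y 0) (Real.sqrt ((y 1)^2 + (y 2)^2 + (y 3)^2)) := by
  have hd : ∃ (V : U2) (u : ℝ), RU V y = dv (y 0) u := by
    set hY := Ymat_herm y
    refine ⟨hY.eigenvectorUnitary, (hY.eigenvalues 0 - hY.eigenvalues 1)/2, ?_⟩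
    have h1 : RU hY.eigenvectorUnitary y = dv ((hY.eigenvalues 0 + hY.eigenvalues 1)/2)
        ((hY.eigenvalues 0 - hY.eigenvalues 1)/2) := by
      apply Ymat_inj
      rw [Ymat_RU, Ymat_dv]
      have h2 := hY.spectral_theorem
      rw [Unitary.conjStarAlgAut_apply] at h2
      have h3 : ∀ A V D : Matrix (Fin 2) (Fin 2) ℂ, A = V * D * star V → star V * V = 1 →
          star V * A * V = D := by
        intro A V D hA hV
        calc star V * A * V = (star V * V) * D * (star V * V) := by rw [hA]; simp only [mul_assoc]
          _ = D := by rw [hV, one_mul, mul_one]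
      rw [h3 _ _ _ h2 (starU _)]
      congr 1
      funext i
      fin_cases i <;> simp <;> ring
    have h3 := RU_zero hY.eigenvectorUnitary y
    rw [h1] at h3
    simp only [dv, Matrix.cons_val_zero] at h3
    rw [h1, h3]
  obtain ⟨V, u, h⟩ := hd
  have hs := RU_sq V y
  rw [h, Fin.sum_univ_four, Fin.sum_univ_four] at hs
  simp [dv] at hs
  have hs2 : (y 1)^2 + (y 2)^2 + (y 3)^2 = u^2 := by linarith
  rw [hs2, Real.sqrt_sq_eq_abs]
  rcases le_total 0 u with hu | hu
  · exact ⟨V, by rw [h, abs_of_nonneg hu]⟩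
  · exact ⟨V * swapU, by rw [← RU_mul, h, RU_swap, abs_of_nonpos hu]⟩

instance matSC : SecondCountableTopology (Matrix (Fin 2) (Fin 2) ℂ) :=
  inferInstanceAs (SecondCountableTopology (Fin 2 → Fin 2 → ℂ))

instance U2SC : SecondCountableTopology U2 :=
  TopologicalSpace.Subtype.secondCountableTopology (α := Matrix (Fin 2) (Fin 2) ℂ) _

theorem U2_isCompact : IsCompact ((Matrix.unitaryGroup (Fin 2) ℂ : Set (Matrix (Fin 2) (Fin 2) ℂ))) := by
  have hc : IsCompact (Set.pi Set.univ fun _ : Fin 2 => Set.pi Set.univ fun _ : Fin 2 =>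
      Metric.closedBall (0:ℂ) 1) :=
    isCompact_univ_pi fun _ => isCompact_univ_pi fun _ => isCompact_closedBall _ _
  refine IsCompact.of_isClosed_subset hc (isClosed_unitary (R := Matrix (Fin 2) (Fin 2) ℂ)) ?_
  intro U hU
  exact fun i _ j _ => mem_closedBall_zero_iff.mpr (entry_norm_bound_of_unitary hU i j)

instance U2C : CompactSpace U2 := isCompact_iff_compactSpace.mp U2_isCompact

theorem U2_right (μ : Measure U2) [μ.IsHaarMeasure] [IsProbabilityMeasure μ] (g : U2) :
    μ.map (fun x => x * g) = μ := by
  have : IsProbabilityMeasure (μ.map (fun x => x * g)) :=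
    Measure.isProbabilityMeasure_map (by fun_prop)
  have : (μ.map (fun x => x * g)).IsHaarMeasure := Measure.isHaarMeasure_map_mul_right μ g
  exact Measure.isHaarMeasure_eq_of_isProbabilityMeasure _ _

theorem Ymat_continuous : Continuous Ymat := by
  unfold Ymat
  fun_prop

theorem cvec_continuous : Continuous cvec := by
  unfold cvec
  fun_prop

theorem RU_continuous : Continuous (fun p : U2 × (Fin 4 → ℝ) => RU p.1 p.2) := by
  unfold RU
  have := Ymat_continuous
  have := cvec_continuous
  fun_prop

/-- radial integration in three dimensions -/
theorem polar3 (h : ℝ → ENNReal) (hm : Measurable h) :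
    ∫⁻ r : EuclideanSpace ℝ (Fin 3), h ‖r‖ = ENNReal.ofReal (4 * Real.pi) *
      ∫⁻ u in Set.Ioi (0:ℝ), ENNReal.ofReal (u^2) * h u := by
  have hb : (volume : Measure (EuclideanSpace ℝ (Fin 3))).toSphere Set.univ = ENNReal.ofReal (4 * Real.pi) := by
    rw [Measure.toSphere_apply_univ, EuclideanSpace.volume_ball_fin_three]
    simp only [finrank_euclideanSpace, Fintype.card_fin, Nat.cast_ofNat, ENNReal.ofReal_one, one_pow, one_mul]
    rw [show (3:ENNReal) = ENNReal.ofReal 3 by simp, ← ENNReal.ofReal_mul (by norm_num)]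
    congr 1; ring
  have hp := (volume : Measure (EuclideanSpace ℝ (Fin 3))).measurePreserving_homeomorphUnitSphereProd
  have h1 := hp.lintegral_comp (f := fun p => h p.2) (by fun_prop)
  simp only [homeomorphUnitSphereProd_apply_snd_coe] at h1
  rw [lintegral_subtype_comap (measurableSet_singleton _).compl (fun x : EuclideanSpace ℝ (Fin 3) => h ‖x‖),
        restrict_compl_singleton] at h1
  rw [h1, lintegral_prod _ (by fun_prop)]
  simp only [lintegral_const, hb]
  rw [mul_comm, Measure.volumeIoiPow, lintegral_withDensity_eq_lintegral_mul _ (by fun_prop) (by fun_prop)]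
  congr 1
  rw [← lintegral_subtype_comap measurableSet_Ioi]
  simp

theorem lint_scale (k : ℝ → ENNReal) (hk : Measurable k) (c : ℝ) (hc : c ≠ 0) :
    ∫⁻ x, k x = ENNReal.ofReal |c| * ∫⁻ x, k (c * x) := by
  conv_lhs => rw [← Real.smul_map_volume_mul_left hc]
  rw [lintegral_smul_measure, lintegral_map hk (by fun_prop)]
  rfl

theorem lint_even (k : ℝ → ENNReal) (he : ∀ x, k (-x) = k x) :
    ∫⁻ x, k x = 2 * ∫⁻ x in Set.Ioi (0:ℝ), k x := by
  rw [← lintegral_add_compl k (measurableSet_Ioi (a := (0:ℝ))), two_mul]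
  congr 1
  rw [Set.compl_Ioi, ← Measure.restrict_congr_set (Iio_ae_eq_Iic (a := (0:ℝ)))]
  have h := (Measure.measurePreserving_neg (volume : Measure ℝ)).setLIntegral_comp_preimage_emb
    (MeasurableEquiv.neg ℝ).measurableEmbedding k (Set.Ioi 0)
  rw [← h]
  simp [he]

theorem lint_rot (K : ℝ × ℝ → ENNReal) (hK : Measurable K) :
    ∫⁻ p, K p = ENNReal.ofReal 2 * ∫⁻ t, ∫⁻ u, K (t + u, t - u) := by
  rw [Measure.volume_eq_prod, lintegral_prod _ hK.aemeasurable]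
  have h1 : ∀ a : ℝ, ∫⁻ b, K (a, b) = ENNReal.ofReal 2 * ∫⁻ u, K (a, a - 2 * u) := by
    intro a
    rw [← lintegral_sub_left_eq_self (fun b => K (a, b)) a,
      lint_scale (fun x => K (a, a - x)) (by fun_prop) 2 (by norm_num)]
    norm_num
  simp only [h1]
  rw [lintegral_const_mul' _ _ (by simp)]
  congr 1
  rw [lintegral_lintegral_swap (by fun_prop)]
  conv_rhs => rw [lintegral_lintegral_swap (by fun_prop)]
  refine lintegral_congr fun u => ?_
  rw [← lintegral_add_right_eq_self _ u]
  refine lintegral_congr fun t => ?_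
  congr 2
  ring

theorem lint_r4 (H : ℝ → ℝ → ENNReal) (hH : Measurable (Function.uncurry H))
    (he : ∀ t u, H t (-u) = H t u) :
    ∫⁻ y : Fin 4 → ℝ, H (y 0) (Real.sqrt ((y 1)^2 + (y 2)^2 + (y 3)^2)) =
    ∫⁻ p : ℝ × ℝ, ENNReal.ofReal (Real.pi / 4 * (p.1 - p.2)^2) * H ((p.1 + p.2)/2) ((p.1 - p.2)/2) := by
  have hH2 : ∀ t, Measurable (H t) := fun t => hH.comp (by fun_prop : Measurable fun u => (t, u))
  have hH3 : Measurable fun p : ℝ × ℝ => H ((p.1 + p.2)/2) ((p.1 - p.2)/2) :=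
    hH.comp (by fun_prop : Measurable fun p : ℝ × ℝ => ((p.1 + p.2)/2, (p.1 - p.2)/2))
  have h1 := (volume_preserving_piFinSuccAbove (fun _ : Fin 4 => ℝ) 0).lintegral_comp
    (f := fun p => H p.1 (Real.sqrt ((p.2 0)^2 + (p.2 1)^2 + (p.2 2)^2)))
    (hH.comp (by fun_prop : Measurable fun p : ℝ × (Fin 3 → ℝ) => (p.1, (Real.sqrt ((p.2 0)^2 + (p.2 1)^2 + (p.2 2)^2)))))
  refine Eq.trans ?_ (h1.trans ?_)
  · rfl
  rw [lint_rot _ (by fun_prop), Measure.volume_eq_prod, lintegral_prod]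
  swap
  · exact (hH.comp (by fun_prop : Measurable fun p : ℝ × (Fin 3 → ℝ) => (p.1, (Real.sqrt ((p.2 0)^2 + (p.2 1)^2 + (p.2 2)^2))))).aemeasurable
  rw [← lintegral_const_mul' _ _ (by simp)]
  refine lintegral_congr fun t => ?_
  have h2 := (PiLp.volume_preserving_toLp (Fin 3)).lintegral_comp (f := fun r => H t ‖r‖) ((hH2 t).comp measurable_norm)
  refine Eq.trans ?_ (h2.trans ?_)
  · simp [EuclideanSpace.norm_eq, Fin.sum_univ_three]
  rw [polar3 _ (hH2 t)]
  rw [lint_even (fun u => ENNReal.ofReal (Real.pi / 4 * ((t+u) - (t-u))^2) * H (((t+u) + (t-u))/2) (((t+u) - (t-u))/2))]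
  · rw [← mul_assoc, ← lintegral_const_mul' _ _ ENNReal.ofReal_ne_top,
      ← lintegral_const_mul' _ _ (ENNReal.mul_ne_top ENNReal.ofReal_ne_top (by simp))]
    refine lintegral_congr fun u => ?_
    rw [← mul_assoc, ← mul_assoc]
    congr 1
    · rw [show (2:ENNReal) = ENNReal.ofReal 2 by simp, ← ENNReal.ofReal_mul (by positivity), ← ENNReal.ofReal_mul (by positivity), ← ENNReal.ofReal_mul (by positivity)]
      congr 1; ring
    · congr 1 <;> ring
  · intro u
    congr 1
    · congr 1; ring
    · rw [← he]
      congr 1 <;> ring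

noncomputable def Psi (p : (ℝ × ℝ) × U2) : Fin 4 → ℝ :=
  RU p.2 (dv ((p.1.1 + p.1.2)/2) ((p.1.1 - p.1.2)/2))

noncomputable def wdens (p : ℝ × ℝ) : ENNReal := ENNReal.ofReal (Real.pi / 4 * (p.1 - p.2)^2)

theorem wdens_meas : Measurable wdens := by unfold wdens; fun_prop

noncomputable def nuW : Measure (ℝ × ℝ) := (volume : Measure (ℝ × ℝ)).withDensity wdens

instance nuW_sf : SigmaFinite nuW :=
  SigmaFinite.withDensity (fun p : ℝ × ℝ => Real.toNNReal (Real.pi / 4 * (p.1 - p.2)^2))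

theorem dv_cont : Continuous fun p : ℝ × ℝ => dv p.1 p.2 := by
  unfold dv
  refine continuous_pi fun i => ?_
  fin_cases i <;> simp <;> fun_prop

theorem Psi_cont : Continuous Psi := by
  have h0 : Continuous fun p : (ℝ × ℝ) × U2 => (((p.1.1 + p.1.2)/2, (p.1.1 - p.1.2)/2) : ℝ × ℝ) := by
    fun_prop
  have h := Continuous.comp (g := fun p : ℝ × ℝ => dv p.1 p.2) dv_cont h0
  have h2 := Continuous.prodMk (continuous_snd (X := ℝ × ℝ) (Y := U2)) h
  have h3 := Continuous.comp (g := fun p : U2 × (Fin 4 → ℝ) => RU p.1 p.2) RU_continuous h2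
  have h4 : Psi = (fun p : U2 × (Fin 4 → ℝ) => RU p.1 p.2) ∘ (fun p : (ℝ × ℝ) × U2 =>
     (p.2, ((fun p : ℝ × ℝ => dv p.1 p.2) ∘ (fun p : (ℝ × ℝ) × U2 => (((p.1.1 + p.1.2)/2, (p.1.1 - p.1.2)/2) : ℝ × ℝ))) p)) := by
    funext p
    simp only [Psi, Function.comp]
  rw [h4]
  exact h3

theorem weyl (μ : Measure U2) [μ.IsHaarMeasure] [IsProbabilityMeasure μ] :
    MeasurePreserving Psi (nuW.prod μ) volume := by
  refine ⟨Psi_cont.measurable, ?_⟩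
  refine Measure.ext_of_lintegral _ fun F hF => ?_
  set g : (Fin 4 → ℝ) → ENNReal := fun y => ∫⁻ U, F (RU U y) ∂μ with hg
  have hRm : Measurable fun p : U2 × (Fin 4 → ℝ) => F (RU p.1 p.2) := hF.comp RU_continuous.measurable
  have hgm : Measurable g := Measurable.lintegral_prod_left' hRm
  have ginv : ∀ V y, g (RU V y) = g y := by
    intro V y
    simp only [hg, RU_mul]
    exact lintegral_mul_left_eq_self (fun U => F (RU U y)) V
  have hL : ∫⁻ y, F y ∂(nuW.prod μ).map Psi = ∫⁻ p, g (dv ((p.1 + p.2)/2) ((p.1 - p.2)/2)) ∂nuW := by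
    rw [lintegral_map hF Psi_cont.measurable, lintegral_prod (fun a => F (Psi a)) (hF.comp Psi_cont.measurable).aemeasurable]
    simp only [hg, Psi]
  have hR : ∫⁻ y, F y = ∫⁻ y, g y := by
    have : ∀ U : U2, ∫⁻ y, F (RU U y) = ∫⁻ y, F y := fun U => (RU_mp U).lintegral_comp hF
    calc ∫⁻ y, F y = ∫⁻ U, ∫⁻ y, F (RU U y) ∂volume ∂μ := by simp [this]
      _ = _ := lintegral_lintegral_swap hRm.aemeasurable
  have hdm : Measurable fun p : ℝ × ℝ => g (dv ((p.1 + p.2)/2) ((p.1 - p.2)/2)) := by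
    have h0 : Measurable fun p : ℝ × ℝ => (((p.1 + p.2)/2, (p.1 - p.2)/2) : ℝ × ℝ) := by fun_prop
    have h1 := Measurable.comp (g := fun p : ℝ × ℝ => g (dv p.1 p.2)) (hgm.comp dv_cont.measurable) h0
    simp only [Function.comp_def] at h1
    exact h1
  rw [hL, hR, nuW, lintegral_withDensity_eq_lintegral_mul _ wdens_meas hdm]
  have h4 := lint_r4 (fun t u => g (dv t u)) (hgm.comp dv_cont.measurable)
    (fun t u => by rw [← RU_swap, ginv])
  refine Eq.trans ?_ (h4.symm.trans (lintegral_congr fun y => ?_))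
  · refine lintegral_congr fun p => ?_
    simp only [Pi.mul_apply, wdens]
  obtain ⟨V, hV⟩ := RU_diag y
  rw [← hV, ginv]

theorem lint_pi_prod {α : Type*} [MeasurableSpace α] (ν : Measure α) [SigmaFinite ν] : ∀ (m : ℕ)
    (f : Fin m → α → ENNReal) (_ : ∀ i, Measurable (f i)),
    ∫⁻ x, ∏ i, f i (x i) ∂(Measure.pi fun _ : Fin m => ν) = ∏ i, ∫⁻ a, f i a ∂ν := by
  intro m
  induction m with
  | zero => intro f hf; simp
  | succ m ih =>
    intro f hf
    have h := (measurePreserving_piFinSuccAbove (fun _ : Fin (m+1) => ν) 0).lintegral_comp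
      (f := fun p => f 0 p.1 * ∏ i : Fin m, f i.succ (p.2 i)) (by fun_prop)
    rw [lintegral_prod_mul (f := f 0) (g := fun y : Fin m → α => ∏ i : Fin m, f i.succ (y i)) (by fun_prop)
      (Measurable.aemeasurable (by fun_prop))] at h
    rw [Fin.prod_univ_succ, ← ih (fun i => f i.succ) (fun i => hf _)]
    refine Eq.trans ?_ h
    refine lintegral_congr fun x => ?_
    rw [Fin.prod_univ_succ]
    rfl

theorem pi_withDens {α : Type*} [MeasurableSpace α] (ν : Measure α) [SigmaFinite ν] (m : ℕ)
    (f : α → ENNReal) (hf : Measurable f) [SigmaFinite (ν.withDensity f)] :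
    Measure.pi (fun _ : Fin m => ν.withDensity f) =
      (Measure.pi fun _ : Fin m => ν).withDensity (fun x => ∏ i, f (x i)) := by
  refine Measure.pi_eq fun s hs => ?_
  rw [withDensity_apply _ (MeasurableSet.univ_pi hs), ← lintegral_indicator (MeasurableSet.univ_pi hs)]
  have h := lint_pi_prod ν m (fun i => (s i).indicator f) (fun i => hf.indicator (hs i))
  refine Eq.trans (Eq.trans ?_ h) ?_
  · refine lintegral_congr fun x => ?_
    by_cases hx : x ∈ Set.univ.pi s
    · rw [Set.indicator_of_mem hx]
      refine Finset.prod_congr rfl fun i _ => ?_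
      rw [Set.indicator_of_mem (hx i (Set.mem_univ i))]
    · rw [Set.indicator_of_notMem hx]
      simp only [Set.mem_pi, Set.mem_univ, true_imp_iff, not_forall] at hx
      obtain ⟨i, hi⟩ := hx
      exact (Finset.prod_eq_zero (Finset.mem_univ i) (Set.indicator_of_notMem hi f)).symm
  · refine Finset.prod_congr rfl fun i _ => ?_
    rw [lintegral_indicator (hs i), withDensity_apply _ (hs i)]

section cum
variable {G : Type*} [Group G]

def padG {m : ℕ} (V : Fin m → G) (j : ℕ) : G := if h : j < m then V ⟨j, h⟩ else 1

def cumQ (v : ℕ → G) : ℕ → G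
  | 0 => v 0
  | (j + 1) => v (j + 1) * cumQ v j

def cumT {m : ℕ} (V : Fin m → G) : Fin m → G := fun j => cumQ (padG V) j

theorem cumQ_congr (v w : ℕ → G) : ∀ k, (∀ j, j ≤ k → v j = w j) → cumQ v k = cumQ w k := by
  intro k
  induction k with
  | zero => intro h; exact h 0 le_rfl
  | succ k ih =>
    intro h
    simp only [cumQ]
    rw [h (k+1) le_rfl, ih fun j hj => h j (by omega)]

def carry : {m : ℕ} → (U : Fin m → G) → G
  | 0, _ => 1
  | (k+1), U => U (Fin.last k)

theorem cumT_succ {m : ℕ} (V : Fin (m+1) → G) :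
    cumT V = (Fin.snoc (α := fun _ => G) (cumT (fun i : Fin m => V i.castSucc))
      (V (Fin.last m) * carry (cumT (fun i : Fin m => V i.castSucc))) : Fin (m+1) → G) := by
  have hp : ∀ j, j < m → padG V j = padG (fun i : Fin m => V i.castSucc) j := by
    intro j hj
    simp [padG, hj, Nat.lt_succ_of_lt hj]
  funext j
  refine Fin.lastCases ?_ (fun i => ?_) j
  · rw [Fin.snoc_last]
    cases m with
    | zero => simp [cumT, carry, cumQ, padG]
    | succ k =>
      simp only [cumT, carry, Fin.val_last, cumQ]
      rw [cumQ_congr _ _ k fun j hj => hp j (by omega)]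
      simp [padG, Fin.last]
  · rw [Fin.snoc_castSucc]
    exact cumQ_congr _ _ _ fun j hj => hp j (by have := i.2; simp at hj; omega)

variable [MeasurableSpace G] [MeasurableMul₂ G]

theorem carry_meas : ∀ {m : ℕ}, Measurable (carry (G := G) (m := m)) 
  | 0 => measurable_const
  | (k+1) => measurable_pi_apply _

theorem cumT_mp (μ : Measure G) [IsProbabilityMeasure μ] (hr : ∀ g, μ.map (fun x => x * g) = μ) :
    ∀ m, MeasurePreserving (cumT (G := G) (m := m)) (Measure.pi fun _ => μ) (Measure.pi fun _ => μ) := by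
  intro m
  induction m with
  | zero =>
    have : cumT (G := G) (m := 0) = id := by funext V j; exact j.elim0
    rw [this]; exact MeasurePreserving.id _
  | succ m ih =>
    have e := measurePreserving_piFinSuccAbove (fun _ : Fin (m+1) => μ) (Fin.last m)
    have sw := Measure.measurePreserving_swap (μ := μ) (ν := Measure.pi fun _ : Fin m => μ)
    have sw2 := Measure.measurePreserving_swap (ν := μ) (μ := Measure.pi fun _ : Fin m => μ)
    have sk := ih.skew_product (μc := μ) (μd := μ) (g := fun V x => x * carry (cumT V))
      (measurable_snd.mul ((carry_meas.comp ih.measurable).comp measurable_fst))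
      (Filter.Eventually.of_forall fun V => hr _)
    have tot := (((e.symm).comp sw2).comp sk).comp (sw.comp e)
    convert tot using 1
    funext V
    rw [cumT_succ]
    simp [MeasurableEquiv.piFinSuccAbove, Fin.insertNthEquiv, Fin.insertNth_last', Fin.removeNth]
    exact ⟨rfl, rfl⟩
end cum

theorem int_weyl (μ : Measure U2) [μ.IsHaarMeasure] [IsProbabilityMeasure μ] (m : ℕ)
    (Φ : (Fin m → Fin 4 → ℝ) → ℂ) (hΦ : Integrable Φ) :
    ∫ x, Φ x = ∫ ab : (Fin m → ℝ) × (Fin m → ℝ), ∫ V : Fin m → U2,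
      ((∏ j, (Real.pi / 4 * (ab.1 j - ab.2 j)^2) : ℝ) : ℂ) *
        Φ (fun j => Psi ((ab.1 j, ab.2 j), cumT V j)) ∂(Measure.pi fun _ => μ) := by
  have h1 := measurePreserving_pi (fun _ : Fin m => nuW.prod μ) (fun _ => volume) (fun _ => weyl μ)
  have e := (measurePreserving_arrowProdEquivProdArrow (ℝ × ℝ) U2 (Fin m) (fun _ => nuW) (fun _ => μ)).symm
  have hc := (MeasurePreserving.id (Measure.pi fun _ : Fin m => nuW)).prod (cumT_mp μ (U2_right μ) m)
  have tot := (h1.comp e).comp hc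
  have hΦ' : Integrable Φ (Measure.pi fun _ : Fin m => (volume : Measure (Fin 4 → ℝ))) := hΦ
  have hi := tot.integrable_comp_of_integrable hΦ'
  have hI := integral_map (f := Φ) tot.measurable.aemeasurable
    (by rw [tot.map_eq]; exact hΦ'.aestronglyMeasurable)
  rw [tot.map_eq] at hI
  have h2 := integral_prod _ hi
  have hm : Measurable fun p : Fin m → ℝ × ℝ => ∏ i, wdens (p i) := by
    have := wdens_meas
    fun_prop
  refine hI.trans (h2.trans ?_)
  have hnu : (Measure.pi fun _ : Fin m => nuW) = (Measure.pi fun _ : Fin m => (volume : Measure (ℝ × ℝ))).withDensity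
    (fun x => ∏ i, wdens (x i)) := by
    have : SigmaFinite ((volume : Measure (ℝ × ℝ)).withDensity wdens) := nuW_sf
    exact pi_withDens _ m wdens wdens_meas
  rw [hnu, integral_withDensity_eq_integral_toReal_smul hm
    (Filter.Eventually.of_forall fun p => by
      exact ENNReal.prod_lt_top fun i _ => ENNReal.ofReal_lt_top)]
  have e2 := (volume_measurePreserving_arrowProdEquivProdArrow ℝ ℝ (Fin m)).symm
  refine (e2.integral_comp' _).symm.trans ?_
  refine integral_congr_ae (Filter.Eventually.of_forall fun ab => ?_)
  have hw : (∏ i, wdens (ab.1 i, ab.2 i)).toReal = ∏ j, (Real.pi / 4 * (ab.1 j - ab.2 j)^2) := by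
    rw [ENNReal.toReal_prod]
    refine Finset.prod_congr rfl fun i _ => ?_
    rw [wdens, ENNReal.toReal_ofReal (by positivity)]
  dsimp only
  rw [integral_const_mul, ← hw]
  exact Complex.real_smul

section ptw
variable (n : ℕ) (a b : Fin (2*n+1) → ℝ) (V : Fin (2*n+1) → U2)

noncomputable def Xn (j : ℕ) : Fin 4 → ℝ :=
  RU (cumQ (padG V) j) (dv ((pad (2*n+1) a j + pad (2*n+1) b j)/2) ((pad (2*n+1) a j - pad (2*n+1) b j)/2))

theorem pad_fin (m : ℕ) (x : Fin m → ℝ) (j : Fin m) : pad m x j = x j := by simp [pad]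

theorem Xn_fin (j : Fin (2*n+1)) : Psi ((a j, b j), cumT V j) = Xn n a b V j := by
  simp only [Psi, Xn, pad_fin, cumT]

theorem Ymat_Xn (j : ℕ) : Ymat (Xn n a b V j) = star ((cumQ (padG V) j : U2) : Matrix (Fin 2) (Fin 2) ℂ) *
    Amat n a b j * ((cumQ (padG V) j : U2) : Matrix (Fin 2) (Fin 2) ℂ) := by
  rw [Xn, Ymat_RU, Ymat_dv, Amat]
  congr 3
  ring_nf

theorem Vpad_eq (j : ℕ) : Vpad n V j = ((padG V j : U2) : Matrix (Fin 2) (Fin 2) ℂ) := by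
  unfold Vpad padG
  split_ifs <;> rfl

theorem Pprod_eq (j : ℕ) : Pprod n V j * (V ⟨0, Nat.succ_pos _⟩ : Matrix (Fin 2) (Fin 2) ℂ) =
    ((cumQ (padG V) j : U2) : Matrix (Fin 2) (Fin 2) ℂ) := by
  induction j with
  | zero => simp [Pprod, cumQ, padG]
  | succ j ih => rw [Pprod, mul_assoc, ih, Vpad_eq, cumQ]; rfl

theorem tr_step (k : ℕ) : ((star (Vpad n V (k+1)) * Amat n a b (k+1) * Vpad n V (k+1) - Amat n a b k)^2).trace
    = 2 * ∑ c, (((Xn n a b V (k+1) c - Xn n a b V k c : ℝ)) : ℂ)^2 := by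
  have h := Ymat_sq_trace (Xn n a b V (k+1) - Xn n a b V k)
  simp only [Pi.sub_apply] at h
  rw [← h, Ymat_sub, Ymat_Xn, Ymat_Xn, Vpad_eq, cumQ]
  set Q := cumQ (padG V) k
  set U := padG V (k+1)
  rw [← trace_conj Q, ← conj_sq]
  congr 2
  have : ((U * Q : U2) : Matrix (Fin 2) (Fin 2) ℂ) = (U : Matrix (Fin 2) (Fin 2) ℂ) * (Q : Matrix (Fin 2) (Fin 2) ℂ) := rfl
  rw [this, star_mul, mul_sub, sub_mul]
  simp only [mul_assoc]

theorem Xn_zero (j : ℕ) : Xn n a b V j 0 = (pad (2*n+1) a j + pad (2*n+1) b j)/2 := by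
  rw [Xn, RU_zero]; rfl

theorem Xn_sq (j : ℕ) : ∑ c, (Xn n a b V j c)^2 = ((pad (2*n+1) a j)^2 + (pad (2*n+1) b j)^2)/2 := by
  rw [Xn, RU_sq, Fin.sum_univ_four]
  simp [dv]
  ring

theorem det_Y (t : ℂ) (y : Fin 4 → ℝ) : (t • (1 : Matrix (Fin 2) (Fin 2) ℂ) + Complex.I • Ymat y).det =
    (t + Complex.I * y 0)^2 + ((∑ c, (y c)^2 - (y 0)^2 : ℝ) : ℂ) := by
  rw [Ymat_eq, Matrix.det_fin_two, Fin.sum_univ_four]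
  simp
  ring_nf
  simp

theorem det_Xn (l0 : ℝ) (j : ℕ) : (((l0/2 : ℝ) : ℂ) • (1 : Matrix (Fin 2) (Fin 2) ℂ) +
      Complex.I • Ymat (Xn n a b V j)).det =
    - ((((pad (2*n+1) a j : ℝ) : ℂ) - Complex.I * (l0 : ℂ)/2) *
      (((pad (2*n+1) b j : ℝ) : ℂ) - Complex.I * (l0 : ℂ)/2)) := by
  rw [det_Y, Xn_sq, Xn_zero]
  push_cast
  ring_nf
  simp
  ring

theorem lin_Xn (ξ₁ ξ₂ : ℝ) (j : ℕ) : (star (Pprod n V j * (V ⟨0, Nat.succ_pos _⟩ : Matrix (Fin 2) (Fin 2) ℂ)) *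
            Amat n a b j *
            (Pprod n V j * (V ⟨0, Nat.succ_pos _⟩ : Matrix (Fin 2) (Fin 2) ℂ)) *
            Matrix.diagonal ![((ξ₁ : ℝ) : ℂ), ((ξ₂ : ℝ) : ℂ)]).trace =
    (ξ₁ : ℂ) * ((Xn n a b V j 0 : ℂ) + Xn n a b V j 3) + ξ₂ * ((Xn n a b V j 0 : ℂ) - Xn n a b V j 3) := by
  rw [Pprod_eq, ← Ymat_Xn, Ymat_eq]
  simp [Matrix.trace, Fin.sum_univ_two, Matrix.vecMul_diagonal]
  ring

theorem exp_ffun (l0 x : ℝ) (hx : x ≠ 0) : Complex.exp (-ffun l0 x) =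
    ((x : ℂ) - Complex.I * (l0 : ℂ)/2) * Complex.exp (-((x : ℂ) + Complex.I * (l0 : ℂ)/2)^2/2) := by
  have h : (x : ℂ) - Complex.I * (l0 : ℂ)/2 ≠ 0 := by
    intro h
    apply hx
    simpa using congrArg Complex.re h
  rw [ffun, neg_sub, sub_eq_add_neg, Complex.exp_add, Complex.exp_log h]
  congr 2
  ring

theorem expo (W l0 ξ₁ ξ₂ R : ℝ) (hR : R ≠ 0) :
    evR (fun p : KX n => Xn n a b V p.1 p.2)
      (qX n W (ell ![((l0 + ξ₁/R - l0/2 : ℝ) : ℂ), ((l0 + ξ₂/R - l0/2 : ℝ) : ℂ)])) =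
    (-(2*n+1) * (l0:ℂ)^2/4) +
    (-(((W : ℝ) : ℂ)^2/2) * ∑ j ∈ Finset.Ico 1 (2*n+1),
        ((star (Vpad n V j) * Amat n a b j * Vpad n V j - Amat n a b (j-1))^2).trace
      - (Complex.I / ((R : ℝ) : ℂ)) * ∑ j ∈ Finset.range (2*n+1),
          (star (Pprod n V j * (V ⟨0, Nat.succ_pos _⟩ : Matrix (Fin 2) (Fin 2) ℂ)) *
            Amat n a b j *
            (Pprod n V j * (V ⟨0, Nat.succ_pos _⟩ : Matrix (Fin 2) (Fin 2) ℂ)) *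
            Matrix.diagonal ![((ξ₁ : ℝ) : ℂ), ((ξ₂ : ℝ) : ℂ)]).trace) +
    ∑ j : Fin (2*n+1), (-((a j : ℂ) + Complex.I * (l0 : ℂ)/2)^2/2 + -((b j : ℂ) + Complex.I * (l0 : ℂ)/2)^2/2) := by
  have hRc : (R : ℂ) ≠ 0 := by exact_mod_cast hR
  rw [evR_qX]
  have hq : (∑ c, ∑ j, ∑ k, Minv n W j k * Xn n a b V j c * Xn n a b V k c) =
      W^2 * ∑ k ∈ Finset.range (2*n), ∑ c, (Xn n a b V (k+1) c - Xn n a b V k c)^2 +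
      ∑ i : Fin (2*n+1), ((a i)^2 + (b i)^2)/2 := by
    have h1 : ∀ c, ∑ j, ∑ k, Minv n W j k * Xn n a b V j c * Xn n a b V k c =
        W^2 * ∑ k ∈ Finset.range (2*n), (Xn n a b V (k+1) c - Xn n a b V k c)^2 + ∑ i : Fin (2*n+1), (Xn n a b V i c)^2 := by
      intro c
      rw [Minv_quad n W (fun j => Xn n a b V j c)]
      congr 2
      refine Finset.sum_congr rfl fun k hk => ?_
      have hk := Finset.mem_range.mp hk
      simp [pad, show k < 2*n+1 by omega, hk]
    simp only [h1]
    rw [Finset.sum_add_distrib, ← Finset.mul_sum]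
    congr 1
    · congr 1
      exact Finset.sum_comm
    · refine Finset.sum_comm.trans (Finset.sum_congr rfl fun i _ => ?_)
      rw [Xn_sq, pad_fin, pad_fin]
  rw [hq]
  have hT : ∑ j ∈ Finset.Ico 1 (2*n+1),
        ((star (Vpad n V j) * Amat n a b j * Vpad n V j - Amat n a b (j-1))^2).trace =
      2 * ∑ k ∈ Finset.range (2*n), ∑ c, (((Xn n a b V (k+1) c - Xn n a b V k c : ℝ)) : ℂ)^2 := by
    rw [Finset.sum_Ico_eq_sum_range, Finset.mul_sum]
    refine Finset.sum_congr (by simp) fun k _ => ?_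
    rw [add_comm 1 k, ← tr_step]
    simp
  rw [hT]
  simp only [lin_Xn]
  rw [Finset.sum_range (n := 2*n+1)]
  have hlin : (∑ c, ∑ j : Fin (2*n+1), ell ![((l0 + ξ₁/R - l0/2 : ℝ) : ℂ), ((l0 + ξ₂/R - l0/2 : ℝ) : ℂ)] c * ((Xn n a b V j c : ℝ) : ℂ)) =
      ∑ j : Fin (2*n+1), (-Complex.I * (l0/2) * (a j + b j)) - (Complex.I / R) * ∑ j : Fin (2*n+1),
       ((ξ₁ : ℂ) * ((Xn n a b V j 0 : ℂ) + Xn n a b V j 3) + ξ₂ * ((Xn n a b V j 0 : ℂ) - Xn n a b V j 3)) := by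
    rw [Finset.mul_sum, ← Finset.sum_sub_distrib]
    refine Finset.sum_comm.trans (Finset.sum_congr rfl fun j _ => ?_)
    have h0 : (a j : ℂ) + b j = 2 * Xn n a b V j 0 := by
      rw [Xn_zero, pad_fin, pad_fin]; push_cast; ring
    rw [Fin.sum_univ_four, h0]
    simp [ell]
    field_simp
    ring
  rw [hlin]
  have hs : ∑ j : Fin (2*n+1), (-((a j : ℂ) + Complex.I * (l0 : ℂ)/2)^2/2 + -((b j : ℂ) + Complex.I * (l0 : ℂ)/2)^2/2) =
     ((2*n+1) * (l0:ℂ)^2/4) + ∑ j : Fin (2*n+1), (-Complex.I * (l0/2) * (a j + b j)) - ∑ j : Fin (2*n+1), (((a j:ℂ))^2 + (b j:ℂ)^2)/2 := by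
    have hc : ((2*n+1) * (l0:ℂ)^2/4) = ∑ j : Fin (2*n+1), (l0:ℂ)^2/4 := by
      simp; ring
    rw [hc, ← Finset.sum_add_distrib, ← Finset.sum_sub_distrib]
    refine Finset.sum_congr rfl fun j _ => ?_
    ring_nf
    simp
    ring
  rw [hs]
  push_cast
  ring
end ptw

theorem curry_mp (ι κ : Type*) [Fintype ι] [Fintype κ] :
    MeasurePreserving (MeasurableEquiv.curry ι κ ℝ).symm := by
  refine ⟨(MeasurableEquiv.curry ι κ ℝ).symm.measurable, ?_⟩
  refine (Measure.pi_eq fun s hs => ?_).symm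
  rw [MeasurableEquiv.map_apply]
  have : (MeasurableEquiv.curry ι κ ℝ).symm ⁻¹' (Set.univ.pi s) =
      Set.univ.pi (fun i => Set.univ.pi fun j => s (i, j)) := by
    ext y
    simp only [Set.mem_preimage, Set.mem_pi, Set.mem_univ, true_imp_iff, Prod.forall]
    rfl
  rw [this, volume_pi_pi, Fintype.prod_prod_type]
  refine Finset.prod_congr rfl fun i _ => ?_
  rw [volume_pi_pi]

theorem ptw (n : ℕ) (W l0 ξ₁ ξ₂ : ℝ) (hR : (2*n+1 : ℝ) * rho l0 ≠ 0) (a b : Fin (2*n+1) → ℝ) (V : Fin (2*n+1) → U2)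
    (ha : ∀ j, a j ≠ 0) (hb : ∀ j, b j ≠ 0) :
    ((∏ j, (Real.pi / 4 * (a j - b j)^2) : ℝ) : ℂ) *
      ((∏ j : Fin (2*n+1), (((l0/2 : ℝ) : ℂ) • (1 : Matrix (Fin 2) (Fin 2) ℂ) +
        Complex.I • Ymat (fun c => Psi ((a j, b j), cumT V j) c)).det) *
      wX n W (ell ![((l0 + ξ₁/((2*n+1)*rho l0) - l0/2 : ℝ) : ℂ), ((l0 + ξ₂/((2*n+1)*rho l0) - l0/2 : ℝ) : ℂ)])
        (fun p : KX n => Psi ((a p.1, b p.1), cumT V p.1) p.2)) =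
    -(((Real.pi / 4 : ℝ) : ℂ)^(2*n+1) * Complex.exp (-(2*n+1) * (l0:ℂ)^2/4)) * G2 n W l0 ξ₁ ξ₂ a b V := by
  simp only [Xn_fin]
  rw [wX, expo n a b V W l0 ξ₁ ξ₂ _ hR, G2]
  have hdet : (∏ j : Fin (2*n+1), (((l0/2 : ℝ) : ℂ) • (1 : Matrix (Fin 2) (Fin 2) ℂ) +
        Complex.I • Ymat (fun c => Xn n a b V j c)).det) =
      - ∏ j : Fin (2*n+1), (((a j : ℂ) - Complex.I * (l0 : ℂ)/2) * ((b j : ℂ) - Complex.I * (l0 : ℂ)/2)) := by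
    rw [show (- ∏ j : Fin (2*n+1), (((a j : ℂ) - Complex.I * (l0 : ℂ)/2) * ((b j : ℂ) - Complex.I * (l0 : ℂ)/2))) =
       (∏ j : Fin (2*n+1), (-1:ℂ)) * ∏ j : Fin (2*n+1), (((a j : ℂ) - Complex.I * (l0 : ℂ)/2) * ((b j : ℂ) - Complex.I * (l0 : ℂ)/2)) by
        simp [pow_succ, pow_mul]]
    rw [← Finset.prod_mul_distrib]
    refine Finset.prod_congr rfl fun j _ => ?_
    refine (det_Xn n a b V l0 j).trans ?_
    rw [pad_fin, pad_fin]; ring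
  rw [hdet]
  have hpr : ((∏ j, (Real.pi / 4 * (a j - b j)^2) : ℝ) : ℂ) = ((Real.pi / 4 : ℝ) : ℂ)^(2*n+1) *
      ∏ l ∈ Finset.range (2*n+1), (((pad (2*n+1) a l - pad (2*n+1) b l : ℝ) : ℂ))^2 := by
    rw [Finset.prod_range]
    simp only [pad_fin]
    rw [Finset.prod_mul_distrib]
    push_cast
    simp [div_pow]
  rw [hpr]
  have hf : ∀ T L : ℂ, Complex.exp (T - ∑ j ∈ Finset.range (2*n+1),
          (ffun l0 (pad (2*n+1) a j) + ffun l0 (pad (2*n+1) b j)) - L) =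
      (∏ j : Fin (2*n+1), (((a j : ℂ) - Complex.I * (l0 : ℂ)/2) * ((b j : ℂ) - Complex.I * (l0 : ℂ)/2))) *
      (Complex.exp (T - L) * Complex.exp (∑ j : Fin (2*n+1), (-((a j : ℂ) + Complex.I * (l0 : ℂ)/2)^2/2 + -((b j : ℂ) + Complex.I * (l0 : ℂ)/2)^2/2))) := by
    intro T L
    rw [Finset.sum_range]
    simp only [pad_fin]
    rw [show ∀ S : ℂ, T - S - L = (T - L) + (-S) by intro S; ring, Complex.exp_add, ← Finset.sum_neg_distrib,
      Complex.exp_sum, Complex.exp_sum]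
    rw [mul_left_comm, ← Finset.prod_mul_distrib]
    congr 1
    refine Finset.prod_congr rfl fun j _ => ?_
    rw [neg_add, Complex.exp_add, exp_ffun _ _ (ha j), exp_ffun _ _ (hb j), Complex.exp_add]
    ring
  rw [hf, Complex.exp_add, Complex.exp_add]
  ring

theorem final_main (n : ℕ) (W : ℝ) (hW : 0 < W) (l0 : ℝ) (hl0 : l0 ∈ Set.Ioo (-2:ℝ) 2) (ξ₁ ξ₂ : ℝ)
    (μ : Measure U2) [μ.IsHaarMeasure] [IsProbabilityMeasure μ] :
    F2 n W (l0 + ξ₁/((2*n+1)*rho l0)) (l0 + ξ₂/((2*n+1)*rho l0)) =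
    -((Cxi n l0 ξ₁ ξ₂ : ℝ) : ℂ) * (((Jmat n W).det : ℝ) : ℂ)^(-2:ℤ) *
      (((4 * Real.pi : ℝ) : ℂ))^(-((2*n+1 : ℕ) : ℤ)) *
      ∫ ab : (Fin (2*n+1) → ℝ) × (Fin (2*n+1) → ℝ), ∫ V : Fin (2*n+1) → U2,
        G2 n W l0 ξ₁ ξ₂ ab.1 ab.2 V ∂(Measure.pi fun _ => μ) := by
  have hrho : 0 < rho l0 := by
    unfold rho
    have : 0 < 4 - l0^2 := by nlinarith [hl0.1, hl0.2]
    positivity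
  have hR : (2*n+1 : ℝ) * rho l0 ≠ 0 := by positivity
  rw [F2_X n W hW _ _ (l0/2)]
  set s : Fin 2 → ℂ := ![((l0 + ξ₁/((2*n+1)*rho l0) - l0/2 : ℝ) : ℂ), ((l0 + ξ₂/((2*n+1)*rho l0) - l0/2 : ℝ) : ℂ)] with hs
  have hre : ∀ r1 r2 : ℝ, ∀ c, (ell ![(r1 : ℂ), (r2 : ℂ)] c).re = 0 := by
    intro r1 r2 c
    fin_cases c <;> simp [ell]
  have hIntg := wX_int n W (ell s) (hre _ _) (MX n (l0/2 : ℝ)).det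
  simp only [MX_det] at hIntg
  have hc := curry_mp (Fin (2*n+1)) (Fin 4)
  have hc1 := (hc.integral_comp' (fun x : KX n → ℝ => (∏ j, (((l0/2 : ℝ) : ℂ) • (1 : Matrix (Fin 2) (Fin 2) ℂ) +
        Complex.I • Ymat (fun c => x (j, c))).det) * wX n W (ell s) x))
  have hc2 := (hc.integrable_comp_emb (MeasurableEquiv.measurableEmbedding _)).mpr hIntg
  have hX : ∫ x : KX n → ℝ, (∏ j, (((l0/2 : ℝ) : ℂ) • (1 : Matrix (Fin 2) (Fin 2) ℂ) +
        Complex.I • Ymat (fun c => x (j, c))).det) * wX n W (ell s) x = 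
      -(((Real.pi / 4 : ℝ) : ℂ)^(2*n+1) * Complex.exp (-(2*n+1) * (l0:ℂ)^2/4)) *
      ∫ ab : (Fin (2*n+1) → ℝ) × (Fin (2*n+1) → ℝ), ∫ V : Fin (2*n+1) → U2,
        G2 n W l0 ξ₁ ξ₂ ab.1 ab.2 V ∂(Measure.pi fun _ => μ) := by
    refine hc1.symm.trans ((int_weyl μ (2*n+1) _ hc2).trans ?_)
    rw [← integral_const_mul]
    have hae : ∀ᵐ ab : (Fin (2*n+1) → ℝ) × (Fin (2*n+1) → ℝ), (∀ j, ab.1 j ≠ 0) ∧ (∀ j, ab.2 j ≠ 0) := by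
      have h1 : ∀ᵐ a : Fin (2*n+1) → ℝ, ∀ j, a j ≠ 0 :=
        ae_all_iff.mpr fun j => Measure.ae_eval_ne _ j 0
      exact (Measure.quasiMeasurePreserving_fst.ae h1).and (Measure.quasiMeasurePreserving_snd.ae h1)
    refine integral_congr_ae ?_
    filter_upwards [hae] with ab hab
    rw [← integral_const_mul]
    refine integral_congr_ae (Filter.Eventually.of_forall fun V => ?_)
    exact ptw n W l0 ξ₁ ξ₂ hR ab.1 ab.2 V hab.1 hab.2
  rw [hX, wX_total]
  generalize (∫ ab : (Fin (2*n+1) → ℝ) × (Fin (2*n+1) → ℝ), ∫ V : Fin (2*n+1) → U2,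
        G2 n W l0 ξ₁ ξ₂ ab.1 ab.2 V ∂(Measure.pi fun _ => μ)) = I0
  rw [← mul_assoc]
  congr 1
  have hell : ∑ c, (ell s c)^2 = -2 * ((s 0)^2 + (s 1)^2) := by
    rw [Fin.sum_univ_four]
    simp [ell]
    ring_nf
    simp
    ring
  have hC : ((Cxi n l0 ξ₁ ξ₂ : ℝ) : ℂ) = (Complex.exp ((2*n+1) * (∑ c, (ell s c)^2)/4))⁻¹ * Complex.exp (-(2*n+1) * (l0:ℂ)^2/4) := by
    rw [← Complex.exp_neg, ← Complex.exp_add, Cxi, Complex.ofReal_exp, hell]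
    congr 1
    have h1 : (rho l0 : ℂ) ≠ 0 := by exact_mod_cast hrho.ne'
    have h2 : (2*n+1 : ℂ) ≠ 0 := by exact_mod_cast (Nat.succ_ne_zero (2*n))
    simp [hs]
    field_simp
    ring
  rw [hC]
  have hpi : (Real.pi : ℂ) ≠ 0 := by exact_mod_cast Real.pi_ne_zero
  have hp4 : ((Real.pi : ℂ)^(2*(2*n+1)))⁻¹ * ((Real.pi / 4 : ℝ) : ℂ)^(2*n+1) = (((4 * Real.pi : ℝ) : ℂ))^(-((2*n+1 : ℕ) : ℤ)) := by
    rw [zpow_neg, zpow_natCast]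
    push_cast
    have h : ((Real.pi : ℂ)^2)⁻¹ * ((Real.pi : ℂ)/4) = (4 * (Real.pi : ℂ))⁻¹ := by field_simp
    rw [pow_mul, ← inv_pow, ← mul_pow, h, inv_pow]
  rw [← hp4, show (-2:ℤ) = -((2:ℕ):ℤ) by norm_num, zpow_neg, zpow_natCast]
  rw [mul_inv, mul_inv]
  ring

/-- the representation of `F₂` as an integral over eigenvalues
`a, b ∈ ℝ^N` and unitary matrices `U_{−n}, V_{−n+1},…,V_n ∈ U(2)` (normalized Haar
measure `μ`):
`F₂ = −C(ξ)(det J)^{−2}(4π)^{−N}·∫ … dμ(U_{−n}) da db ∏dμ(V_q)`. -/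
theorem F2_eigenvalue_representation (n : ℕ) (W : ℝ) (hW : 0 < W)
    (l0 : ℝ) (hl0 : l0 ∈ Set.Ioo (-2 : ℝ) 2) (ξ₁ ξ₂ : ℝ)
    (μ : Measure (Matrix.unitaryGroup (Fin 2) ℂ))
    [μ.IsHaarMeasure] [IsProbabilityMeasure μ] :
    F2 n W (l0 + ξ₁ / ((2*n+1) * rho l0)) (l0 + ξ₂ / ((2*n+1) * rho l0))
      = -((Cxi n l0 ξ₁ ξ₂ : ℝ) : ℂ) * (((Jmat n W).det : ℝ) : ℂ)^(-2 : ℤ) *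
          (((4 * Real.pi : ℝ) : ℂ))^(-((2*n+1 : ℕ) : ℤ)) *
          ∫ ab : (Fin (2*n+1) → ℝ) × (Fin (2*n+1) → ℝ),
            ∫ V : Fin (2*n+1) → Matrix.unitaryGroup (Fin 2) ℂ,
              G2 n W l0 ξ₁ ξ₂ ab.1 ab.2 V ∂(Measure.pi fun _ => μ) := by
  exact final_main n W hW l0 hl0 ξ₁ ξ₂ μ
end

section
/- Let x∈ℂ and m≥1 be such that S_m(x):=det(−Δ^{(m)}+x·I)≠0, and set T_0(x)=1 and T_k(x)=det(−Δ₁^{(k)}+x·I) for k≥1. Then for every i∈{1,…,m}: ((−Δ^{(m)}+x·I)^{−1})_{ii} = T_{i−1}(x)·T_{m−i}(x)/S_m(x). Moreover, for m≥2: ((−Δ^{(m)}+x·I)^{−1})_{11} − ((−Δ^{(m)}+x·I)^{−1})_{1m} = (T_{m−1}(x)−1)/S_m(x). -/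
/-- `−Δ₁^{(m)} = −Δ^{(m)} + E₁₁`, i.e. diagonal `(2,2,…,2,1)`. -/
noncomputable def negLap1 (m : ℕ) : Matrix (Fin m) (Fin m) ℝ :=
  negLap m + Matrix.of fun (i j : Fin m) => if (i : ℕ) = 0 ∧ (j : ℕ) = 0 then (1:ℝ) else 0

/-- `T_k(x) = det(−Δ₁^{(k)} + x·I)` (with `T_0 = 1`, the determinant of the empty matrix). -/
noncomputable def detT (x : ℂ) (k : ℕ) : ℂ :=
  (((negLap1 k).map Complex.ofReal) + x • 1).det

theorem det_tri {n : ℕ} (A : Matrix (Fin (n+2)) (Fin (n+2)) ℂ)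
    (h1 : ∀ j : Fin n, A 0 j.succ.succ = 0) (h2 : ∀ j : Fin n, A j.succ.succ 0 = 0) :
    A.det = A 0 0 * (A.submatrix Fin.succ Fin.succ).det
      - A 0 1 * A 1 0 * (A.submatrix (fun i : Fin n => i.succ.succ) (fun i => i.succ.succ)).det := by
  rw [Matrix.det_succ_row_zero, Fin.sum_univ_succ, Fin.sum_univ_succ]
  have : (A.submatrix Fin.succ (Fin.succAbove (Fin.succ 0))).det
      = A 1 0 * (A.submatrix (fun i : Fin n => i.succ.succ) (fun i => i.succ.succ)).det := by
    rw [Matrix.det_succ_column_zero, Fin.sum_univ_succ]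
    simp [h2, Matrix.submatrix_submatrix]
    left
    congr 1
  rw [this]
  simp [h1]
  ring

theorem entS (x : ℂ) (m : ℕ) (i j : Fin m) :
    (((negLap m).map Complex.ofReal) + x • 1 : Matrix (Fin m) (Fin m) ℂ) i j =
    if (i:ℕ) = j then 2 + x - (if (i : ℕ) = 0 then 1 else 0) - (if (i : ℕ) = m - 1 then 1 else 0)
    else if (i : ℕ) + 1 = (j : ℕ) ∨ (j : ℕ) + 1 = (i : ℕ) then -1 else 0 := by
  simp only [negLap, Matrix.add_apply, Matrix.map_apply, Matrix.of_apply, Matrix.smul_apply,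
    Matrix.one_apply, smul_eq_mul, Fin.ext_iff]
  split_ifs <;> push_cast <;> ring

theorem entT (x : ℂ) (m : ℕ) (i j : Fin m) :
    (((negLap1 m).map Complex.ofReal) + x • 1 : Matrix (Fin m) (Fin m) ℂ) i j =
    if (i:ℕ) = j then 2 + x - (if (i : ℕ) = m - 1 then 1 else 0)
    else if (i : ℕ) + 1 = (j : ℕ) ∨ (j : ℕ) + 1 = (i : ℕ) then -1 else 0 := by
  simp only [negLap1, negLap, Matrix.add_apply, Matrix.map_apply, Matrix.of_apply,
    Matrix.smul_apply, Matrix.one_apply, smul_eq_mul, Fin.ext_iff]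
  split_ifs <;> first | omega | (push_cast; ring)

theorem detT_zero (x : ℂ) : detT x 0 = 1 := by simp [detT]

theorem detT_one (x : ℂ) : detT x 1 = 1 + x := by
  simp [detT, negLap1, negLap]; norm_num

theorem detT_rec (x : ℂ) (k : ℕ) : detT x (k+2) = (2 + x) * detT x (k+1) - detT x k := by
  unfold detT
  rw [det_tri]
  · congr 1
    · congr 1
      · simp [negLap1, negLap]
      · congr 1
        ext i j
        simp only [Matrix.submatrix_apply, entS, entT, Fin.val_succ]
        grind
    · have : ∀ a b c : ℂ, a = 1 → b = c → a * b = c := by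
        rintro a b c rfl rfl; simp
      apply this
      · simp [negLap1, negLap]
      · congr 1
        ext i j
        simp only [Matrix.submatrix_apply, entS, entT, Fin.val_succ]
        grind
  · intro j; rw [entT]; simp
  · intro j; rw [entT]; simp

theorem detS (x : ℂ) (k : ℕ) :
    (((negLap (k+1)).map Complex.ofReal) + x • 1).det = detT x (k+1) - detT x k := by
  rcases k with _ | k
  · simp [detT_zero, detT_one, negLap]; norm_num
  have : detT x (k+1+1) - detT x (k+1) = (1 + x) * detT x (k+1) - detT x k := by
    rw [detT_rec]; ring
  rw [this]
  unfold detT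
  rw [det_tri]
  · congr 1
    · congr 1
      · simp [negLap]; norm_num
      · congr 1
        ext i j
        simp only [Matrix.submatrix_apply, entS, entT, Fin.val_succ]
        grind
    · have : ∀ a b c : ℂ, a = 1 → b = c → a * b = c := by
        rintro a b c rfl rfl; simp
      apply this
      · simp [negLap]
      · congr 1
        ext i j
        simp only [Matrix.submatrix_apply, entS, entT, Fin.val_succ]
        grind
  · intro j; rw [entS]; simp
  · intro j; rw [entS]; simp

theorem wronsk (x : ℂ) (q : ℕ) : ∀ j, detT x (j+1) * detT x (q+1) - detT x j * detT x q
    = detT x (j+q+2) - detT x (j+q+1) := by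
  induction q with
  | zero => intro j; simp only [detT_zero, detT_one, detT_rec, add_zero, zero_add]; ring
  | succ q ih =>
    intro j
    have h := ih (j+1)
    rw [show j + 1 + q = j + (q+1) by ring] at h
    rw [← h, detT_rec x q, detT_rec x j]; ring

theorem row_sum (x : ℂ) (n : ℕ) (r : Fin (n+1)) (g : ℕ → ℂ) :
    ∑ k : Fin (n+1), (((negLap (n+1)).map Complex.ofReal) + x • 1) r k * g k
    = (2 + x - (if (r:ℕ) = 0 then 1 else 0) - (if (r:ℕ) = n then 1 else 0)) * g r
      - (if (r:ℕ) = n then 0 else g (r+1)) - (if (r:ℕ) = 0 then 0 else g (r-1)) := by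
  have e : ∀ k : Fin (n+1), (((negLap (n+1)).map Complex.ofReal) + x • 1) r k * g k
    = (fun k : ℕ => (if (r:ℕ) = k then
        (2 + x - (if (r:ℕ) = 0 then 1 else 0) - (if (r:ℕ) = n then 1 else 0)) * g k else 0)
      - (if (r:ℕ)+1 = k then g k else 0)
      - (if (r:ℕ) - 1 = k then (if (r:ℕ) = 0 then 0 else g k) else 0)) k := by
    intro k
    simp only [entS, Nat.add_sub_cancel]
    have hk := k.2
    split_ifs <;> first | omega | ring
  rw [Finset.sum_congr rfl (fun k _ => e k), Fin.sum_univ_eq_sum_range (fun k : ℕ => (if (r:ℕ) = k then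
        (2 + x - (if (r:ℕ) = 0 then 1 else 0) - (if (r:ℕ) = n then 1 else 0)) * g k else 0)
      - (if (r:ℕ)+1 = k then g k else 0)
      - (if (r:ℕ) - 1 = k then (if (r:ℕ) = 0 then 0 else g k) else 0)) (n+1),
    Finset.sum_sub_distrib,
    Finset.sum_sub_distrib, Finset.sum_ite_eq, Finset.sum_ite_eq, Finset.sum_ite_eq]
  have := r.2
  simp only [Finset.mem_range]
  grind

theorem green (x : ℂ) (n : ℕ) :
    (((negLap (n+1)).map Complex.ofReal) + x • 1) *
      (Matrix.of fun k j : Fin (n+1) => if (k:ℕ) ≤ j then detT x k * detT x (n - j)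
        else detT x j * detT x (n - k)) = (detT x (n+1) - detT x n) • 1 := by
  ext rr jj
  rw [Matrix.mul_apply]
  have := row_sum x n rr (fun k => if (k:ℕ) ≤ jj then detT x k * detT x (n - jj)
        else detT x jj * detT x (n - k))
  simp only [Matrix.of_apply]
  rw [this]
  clear this
  have hr := rr.2
  have hj := jj.2
  simp only [Matrix.smul_apply, Matrix.one_apply, Fin.ext_iff, smul_eq_mul]
  generalize (rr:ℕ) = r at *
  generalize (jj:ℕ) = j at *
  clear rr jj
  have h0 := detT_zero x
  have h1 := detT_one x
  have hrec := detT_rec x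
  rcases lt_trichotomy r j with h | h | h
  · have a1 : r ≠ n := by omega
    have a2 : r + 1 ≤ j := by omega
    have a3 : r - 1 ≤ j := by omega
    simp only [a1, a2, a3, h.le, h.ne, if_true, if_false]
    rcases r with _ | r
    · simp [h0, h1]; ring
    · simp [hrec]; ring
  · subst h
    have a2 : ¬ r + 1 ≤ r := by omega
    simp only [a2, le_refl, if_true, if_false, Nat.sub_le]
    obtain ⟨q, rfl⟩ : ∃ q, n = r + q := ⟨n - r, by omega⟩
    rcases r with _ | r <;> rcases q with _ | q
    · simp [h0, h1]; ring
    · have := hrec q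
      simp [h0, ← add_assoc, this]; ring
    · have := hrec r
      simp [h0, this]; ring
    · have w := wronsk x q (r+1)
      have e1 : r + 1 + (q+1) - (r+1) = q + 1 := by omega
      have e2 : r + 1 + (q+1) - (r+1+1) = q := by omega
      rw [show r + 1 + (q+1) + 1 = r + 1 + q + 2 by ring, e1, e2,
        show r + 1 + (q+1) = r + 1 + q + 1 by ring, ← w, hrec r]
      have e3 : r + 1 ≠ r + 1 + q + 1 := by omega
      simp only [e3, if_false, Nat.add_sub_cancel, Nat.succ_ne_zero]; ring
  · have a1 : r ≠ 0 := by omega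
    have a2 : ¬ r ≤ j := by omega
    have a3 : ¬ r + 1 ≤ j := by omega
    have a5 : (if r - 1 ≤ j then detT x (r-1) * detT x (n-j) else detT x j * detT x (n - (r-1)))
        = detT x j * detT x (n - (r-1)) := by
      split_ifs with h
      · rw [show r - 1 = j by omega]
      · rfl
    simp only [a1, a2, a3, a5, h.ne.symm, if_false]
    obtain ⟨q, rfl⟩ : ∃ q, n = r + q := ⟨n - r, by omega⟩
    rw [show r + q - (r-1) = q + 1 by omega, show r + q - r = q by omega]
    rcases q with _ | q
    · simp [h0, h1]; ring
    · rw [show r + (q+1) - (r+1) = q by omega, hrec q]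
      simp; ring

/-- if `S_m(x) = det(−Δ^{(m)}+x·I) ≠ 0`, then for every `i ∈ {1,…,m}`
`((−Δ^{(m)}+xI)^{−1})_{ii} = T_{i−1}(x)·T_{m−i}(x)/S_m(x)`, and for `m ≥ 2`
`((−Δ^{(m)}+xI)^{−1})_{11} − ((−Δ^{(m)}+xI)^{−1})_{1m} = (T_{m−1}(x)−1)/S_m(x)`.
(Here `i : Fin m` corresponds to the index `i+1 ∈ {1,…,m}`.) -/
theorem resolvent_entries (x : ℂ) (m : ℕ) (hm : 1 ≤ m)
    (M : Matrix (Fin m) (Fin m) ℂ)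
    (hM : M = ((negLap m).map Complex.ofReal) + x • 1)
    (hS : M.det ≠ 0) :
    (∀ i : Fin m, M⁻¹ i i = detT x (i : ℕ) * detT x (m - 1 - (i : ℕ)) / M.det) ∧
    (2 ≤ m →
      M⁻¹ ⟨0, by omega⟩ ⟨0, by omega⟩ - M⁻¹ ⟨0, by omega⟩ ⟨m - 1, by omega⟩
        = (detT x (m - 1) - 1) / M.det) := by
  obtain ⟨n, rfl⟩ : ∃ n, m = n + 1 := ⟨m - 1, by omega⟩
  have hd : M.det = detT x (n+1) - detT x n := by rw [hM, detS]
  have hg := green x n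
  rw [← hM, ← hd] at hg
  have hinv : M⁻¹ = M.det⁻¹ • (Matrix.of fun k j : Fin (n+1) =>
      if (k:ℕ) ≤ j then detT x k * detT x (n - j) else detT x j * detT x (n - k)) := by
    apply Matrix.inv_eq_right_inv
    rw [Matrix.mul_smul, hg, smul_smul, inv_mul_cancel₀ hS, one_smul]
  rw [hinv]
  constructor
  · intro i
    simp [div_eq_inv_mul]
  · intro _
    simp [div_eq_inv_mul, detT_zero]
    ring
end

section
/- Let m≥1 and let M be a complex symmetric m×m matrix whose real part is positive definite; then Z:=∫_{ℝ^m}e^{−(1/2)xᵀMx}dx converges absolutely, Z≠0, and M is invertible. For F:ℝ^m→ℂ with ∫_{ℝ^m}|F(x)|·e^{−(1/2)Re(xᵀMx)}dx<∞ define ⟨F⟩=Z^{−1}∫_{ℝ^m}F(x)e^{−(1/2)xᵀMx}dx. Then ⟨x_i x_j⟩=(M^{−1})_{ij} for all i,j, and for every C¹ function f:ℝ^m→ℂ such that f and all its first-order partial derivatives grow at most polynomially, one has, for every i, the Gaussian integration-by-parts (Wick) identity ⟨x_i·f⟩ = ∑_{j=1}^{m}(M^{−1})_{ij}·⟨∂f/∂x_j⟩.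 -/
open MeasureTheory

/-- The quadratic form `xᵀMx = ∑_{i,j} M_{ij} x_i x_j` for real `x` and complex `M`. -/
noncomputable def quadForm (m : ℕ) (M : Matrix (Fin m) (Fin m) ℂ) (x : Fin m → ℝ) : ℂ :=
  ∑ i, ∑ j, M i j * (x i : ℂ) * (x j : ℂ)

lemma gw_diag {m : ℕ} (A B : Matrix (Fin m) (Fin m) ℝ) (hA : A.PosDef) (hB : B.transpose = B) :
    ∃ (P : Matrix (Fin m) (Fin m) ℝ) (d : Fin m → ℝ), P.det ≠ 0 ∧
      P.transpose * A * P = 1 ∧ P.transpose * B * P = Matrix.diagonal d := by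
  obtain ⟨X, hX⟩ : ∃ X : Matrix (Fin m) (Fin m) ℝ, A = X.transpose * X := by
    open scoped MatrixOrder in
    obtain ⟨X, hX, -, h⟩ := CFC.exists_sqrt_of_isSelfAdjoint_of_quasispectrumRestricts
        hA.isHermitian (QuasispectrumRestricts.nnreal_of_nonneg hA.posSemidef.nonneg)
    refine ⟨X, ?_⟩
    have h2 : X.transpose = X := by
      have := hX.star_eq
      rwa [Matrix.star_eq_conjTranspose, Matrix.conjTranspose_eq_transpose_of_trivial] at this
    rw [h2, ← h]
  have hXd : IsUnit X.det := by
    have := hA.det_pos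
    rw [hX, Matrix.det_mul] at this
    exact isUnit_iff_ne_zero.2 (right_ne_zero_of_mul this.ne')
  have hH : (X⁻¹.transpose * B * X⁻¹).IsHermitian := by
    rw [Matrix.IsHermitian, Matrix.conjTranspose_eq_transpose_of_trivial]
    simp [Matrix.transpose_mul, hB, Matrix.mul_assoc]
  have hs := hH.spectral_theorem
  rw [Unitary.conjStarAlgAut_apply] at hs
  set U : Matrix (Fin m) (Fin m) ℝ := (hH.eigenvectorUnitary : Matrix (Fin m) (Fin m) ℝ) with hU
  have hUU : U.transpose * U = 1 := by
    have := Unitary.coe_star_mul_self hH.eigenvectorUnitary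
    rwa [Matrix.star_eq_conjTranspose, Matrix.conjTranspose_eq_transpose_of_trivial] at this
  rw [Matrix.star_eq_conjTranspose, Matrix.conjTranspose_eq_transpose_of_trivial] at hs
  refine ⟨X⁻¹ * U, hH.eigenvalues, ?_, ?_, ?_⟩
  · have h1 : U.det ≠ 0 := by
      intro h
      have := congrArg Matrix.det hUU
      simp [h] at this
    rw [Matrix.det_mul]
    refine mul_ne_zero ?_ h1
    rw [Matrix.det_nonsing_inv]
    simpa using isUnit_iff_ne_zero.1 hXd
  · have h1 : X * X⁻¹ = 1 := Matrix.mul_nonsing_inv _ hXd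
    have h2 : X⁻¹.transpose * X.transpose = 1 := by
      rw [← Matrix.transpose_mul, h1, Matrix.transpose_one]
    rw [hX, Matrix.transpose_mul]
    calc _ = U.transpose * (X⁻¹.transpose * X.transpose) * (X * X⁻¹) * U := by
          simp only [Matrix.mul_assoc]
      _ = 1 := by rw [h1, h2]; simp [hUU]
  · rw [Matrix.transpose_mul]
    calc _ = U.transpose * (X⁻¹.transpose * B * X⁻¹) * U := by
          simp only [Matrix.mul_assoc]
      _ = (U.transpose * U) * Matrix.diagonal (RCLike.ofReal ∘ hH.eigenvalues)
            * (U.transpose * U) := by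
          conv_lhs => rw [hs]
          simp only [Matrix.mul_assoc]
      _ = _ := by rw [hUU]; simp

lemma gw_real {m : ℕ} (A P : Matrix (Fin m) (Fin m) ℝ) (d : Fin m → ℝ)
    (h : P.transpose * A * P = Matrix.diagonal d) (y : Fin m → ℝ) :
    ∑ i, ∑ j, A i j * (P.mulVec y) i * (P.mulVec y) j = ∑ i, d i * y i ^ 2 := by
  have h1 : (P.mulVec y) ⬝ᵥ (A.mulVec (P.mulVec y)) = y ⬝ᵥ ((Matrix.diagonal d).mulVec y) := by
    rw [← h, ← Matrix.mulVec_mulVec, ← Matrix.mulVec_mulVec, Matrix.dotProduct_mulVec y,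
      Matrix.vecMul_transpose]
  have h2 : ∑ i, ∑ j, A i j * (P.mulVec y) i * (P.mulVec y) j
      = (P.mulVec y) ⬝ᵥ (A.mulVec (P.mulVec y)) := by
    generalize P.mulVec y = x
    simp only [dotProduct, Matrix.mulVec, Finset.mul_sum]
    exact Finset.sum_congr rfl fun i _ => Finset.sum_congr rfl fun j _ => by ring
  rw [h2, h1]
  simp only [dotProduct, Matrix.mulVec_diagonal]
  exact Finset.sum_congr rfl fun i _ => by ring

lemma gw_split {m : ℕ} (M : Matrix (Fin m) (Fin m) ℂ) (x : Fin m → ℝ) :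
    quadForm m M x = ((∑ i, ∑ j, (M i j).re * x i * x j : ℝ) : ℂ)
      + ((∑ i, ∑ j, (M i j).im * x i * x j : ℝ) : ℂ) * Complex.I := by
  unfold quadForm
  push_cast
  simp only [Finset.sum_mul, ← Finset.sum_add_distrib]
  refine Finset.sum_congr rfl fun i _ => Finset.sum_congr rfl fun j _ => ?_
  conv_lhs => rw [← Complex.re_add_im (M i j)]
  ring

lemma gw_setup {m : ℕ} (M : Matrix (Fin m) (Fin m) ℂ) (hsym : M.transpose = M)
    (hpos : (Matrix.of fun i j : Fin m => (M i j).re).PosDef) :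
    ∃ (P : Matrix (Fin m) (Fin m) ℝ) (d : Fin m → ℝ), P.det ≠ 0 ∧
      ∀ y, quadForm m M (P.mulVec y) = ∑ i, (1 + d i * Complex.I) * (y i : ℂ) ^ 2 := by
  obtain ⟨P, d, h0, h1, h2⟩ := gw_diag _ (Matrix.of fun i j : Fin m => (M i j).im) hpos (by
    ext i j
    simp only [Matrix.transpose_apply, Matrix.of_apply]
    rw [← Matrix.transpose_apply M, hsym])
  refine ⟨P, d, h0, fun y => ?_⟩
  have e1 := gw_real _ P (fun _ => 1) (by rw [h1, Matrix.diagonal_one]) y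
  have e2 := gw_real _ P d h2 y
  simp only [Matrix.of_apply] at e1 e2
  rw [gw_split, e1, e2]
  push_cast
  rw [Finset.sum_mul, ← Finset.sum_add_distrib]
  exact Finset.sum_congr rfl fun i _ => by ring

lemma gw_cont {m : ℕ} (M : Matrix (Fin m) (Fin m) ℂ) :
    Continuous (fun x : Fin m → ℝ => Complex.exp (-(1/2 : ℂ) * quadForm m M x)) := by
  unfold quadForm
  fun_prop

lemma gw_ne {m : ℕ} (M : Matrix (Fin m) (Fin m) ℂ) (hsym : M.transpose = M)
    (hpos : (Matrix.of fun i j : Fin m => (M i j).re).PosDef) :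
    (∫ x : Fin m → ℝ, Complex.exp (-(1/2 : ℂ) * quadForm m M x)) ≠ 0 := by
  obtain ⟨P, d, h0, h⟩ := gw_setup M hsym hpos
  have hmap := Real.map_matrix_volume_pi_eq_smul_volume_pi h0
  have h1 := integral_map (μ := volume) (φ := Matrix.toLin' P)
    (LinearMap.continuous_of_finiteDimensional _).aemeasurable
    (gw_cont M).aestronglyMeasurable
  rw [hmap, integral_smul_measure] at h1
  intro hz
  rw [hz, smul_zero] at h1
  simp only [Matrix.toLin'_apply, h] at h1
  have hb : ∀ i, 0 < ((1/2 : ℂ) * (1 + d i * Complex.I)).re := by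
    intro i; simp
  have h2 := GaussianFourier.integral_cexp_neg_sum_mul_add hb (fun _ => 0)
  have h3 : (fun y : Fin m → ℝ => Complex.exp (-(1/2 : ℂ) * ∑ i, (1 + d i * Complex.I) * (y i : ℂ) ^ 2))
     = fun v : Fin m → ℝ => Complex.exp (-∑ i, ((1/2 : ℂ) * (1 + d i * Complex.I)) * (v i : ℂ) ^ 2 + ∑ i : Fin m, 0 * (v i : ℂ)) := by
    ext y
    congr 1
    simp [Finset.mul_sum, mul_assoc]
  rw [h3, h2] at h1
  refine Finset.prod_ne_zero_iff.2 ?_ h1.symm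
  intro i _
  refine mul_ne_zero ?_ (Complex.exp_ne_zero _)
  rw [Ne, Complex.cpow_eq_zero_iff]
  rintro ⟨h, -⟩
  rw [div_eq_zero_iff] at h
  rcases h with h | h
  · exact Real.pi_ne_zero (by exact_mod_cast h)
  · have := hb i
    rw [h] at this
    simp at this

lemma gw_bound {m : ℕ} (M : Matrix (Fin m) (Fin m) ℂ) (hsym : M.transpose = M)
    (hpos : (Matrix.of fun i j : Fin m => (M i j).re).PosDef) :
    ∃ c : ℝ, 0 < c ∧ ∀ x : Fin m → ℝ,
      ‖Complex.exp (-(1/2 : ℂ) * quadForm m M x)‖ ≤ Real.exp (-(2 * c * ‖x‖ ^ 2)) := by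
  obtain ⟨P, d, h0, h⟩ := gw_setup M hsym hpos
  let L : (Fin m → ℝ) →L[ℝ] (Fin m → ℝ) := LinearMap.toContinuousLinearMap (Matrix.toLin' P)
  have hL : ∀ y, L y = P.mulVec y := fun y => rfl
  set K : ℝ := ‖L‖ + 1 with hK
  have hKp : 0 < K := by positivity
  refine ⟨1 / (4 * K ^ 2), by positivity, fun x => ?_⟩
  obtain ⟨y, rfl⟩ : ∃ y, P.mulVec y = x := ⟨P⁻¹.mulVec x, by
    rw [Matrix.mulVec_mulVec, Matrix.mul_nonsing_inv _ (isUnit_iff_ne_zero.2 h0),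
      Matrix.one_mulVec]⟩
  rw [h, Complex.norm_exp]
  refine Real.exp_le_exp.2 ?_
  have e1 : (-(1/2 : ℂ) * ∑ i, (1 + d i * Complex.I) * (y i : ℂ) ^ 2).re
      = -(1/2) * ∑ i, y i ^ 2 := by
    have : (-(1/2 : ℂ) * ∑ i, (1 + d i * Complex.I) * (y i : ℂ) ^ 2)
       = ((-(1/2) * ∑ i, y i ^ 2 : ℝ) : ℂ) + ((-(1/2) * ∑ i, d i * y i ^ 2 : ℝ) : ℂ) * Complex.I := by
      push_cast
      rw [mul_assoc, ← mul_add, Finset.sum_mul, ← Finset.sum_add_distrib]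
      congr 1
      exact Finset.sum_congr rfl fun i _ => by ring
    rw [this]
    simp only [Complex.add_re, Complex.ofReal_re, Complex.re_ofReal_mul, Complex.I_re, mul_zero, add_zero]
  rw [e1]
  have e2 : ‖y‖ ^ 2 ≤ ∑ i, y i ^ 2 := by
    have : ‖y‖ ≤ √(∑ i, y i ^ 2) := by
      refine (pi_norm_le_iff_of_nonneg (Real.sqrt_nonneg _)).2 fun i => ?_
      refine Real.le_sqrt_of_sq_le ?_
      rw [Real.norm_eq_abs, sq_abs]
      exact Finset.single_le_sum (f := fun i => y i ^ 2) (fun i _ => sq_nonneg _) (Finset.mem_univ i)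
    calc ‖y‖ ^ 2 ≤ (√(∑ i, y i ^ 2)) ^ 2 := by gcongr
      _ = _ := Real.sq_sqrt (Finset.sum_nonneg fun i _ => sq_nonneg _)
  have e3 : ‖P.mulVec y‖ ≤ K * ‖y‖ := by
    rw [← hL]
    refine (L.le_opNorm y).trans ?_
    gcongr
    linarith
  have e4 : ‖P.mulVec y‖ ^ 2 ≤ K ^ 2 * ‖y‖ ^ 2 := by
    rw [← mul_pow]; gcongr
  have e5 : 2 * (1 / (4 * K ^ 2)) * ‖P.mulVec y‖ ^ 2 ≤ 1 / 2 * ‖y‖ ^ 2 := by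
    calc _ ≤ 2 * (1 / (4 * K ^ 2)) * (K ^ 2 * ‖y‖ ^ 2) := by gcongr
      _ = _ := by field_simp; norm_num
  linarith

lemma gw_intexp (m : ℕ) (hm : 1 ≤ m) (c : ℝ) (hc : 0 < c) :
    Integrable (fun x : Fin m → ℝ => Real.exp (-(c * ‖x‖ ^ 2))) := by
  have hm' : (0 : ℝ) < m := by exact_mod_cast hm
  have h1 : Integrable (fun x : Fin m → ℝ => ∏ i, Real.exp (-(c / m) * x i ^ 2)) :=
    Integrable.fintype_prod (f := fun _ (v : ℝ) => Real.exp (-(c / m) * v ^ 2))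
      fun i => integrable_exp_neg_mul_sq (by positivity)
  refine h1.mono' (by fun_prop) (ae_of_all _ fun x => ?_)
  rw [Real.norm_eq_abs, Real.abs_exp, ← Real.exp_sum]
  refine Real.exp_le_exp.2 ?_
  rw [← Finset.mul_sum]
  have : ∑ i, x i ^ 2 ≤ m * ‖x‖ ^ 2 := by
    calc _ ≤ ∑ i : Fin m, ‖x‖ ^ 2 := by
          refine Finset.sum_le_sum fun i _ => ?_
          rw [← sq_abs, ← Real.norm_eq_abs]
          gcongr
          exact norm_le_pi_norm x i
      _ = _ := by simp
  have : c / m * ∑ i, x i ^ 2 ≤ c / m * (m * ‖x‖ ^ 2) := by gcongr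
  have e : c / m * (m * ‖x‖ ^ 2) = c * ‖x‖ ^ 2 := by field_simp
  linarith

lemma gw_int {m : ℕ} (hm : 1 ≤ m) (M : Matrix (Fin m) (Fin m) ℂ) (hsym : M.transpose = M)
    (hpos : (Matrix.of fun i j : Fin m => (M i j).re).PosDef) (g : (Fin m → ℝ) → ℂ)
    (hg : Continuous g) (C : ℝ) (k : ℕ) (hb : ∀ x, ‖g x‖ ≤ C * (1 + ‖x‖) ^ k) :
    Integrable (fun x => g x * Complex.exp (-(1/2 : ℂ) * quadForm m M x)) := by
  obtain ⟨c, hc, h⟩ := gw_bound M hsym hpos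
  have hC : 0 ≤ C := by
    have := (norm_nonneg _).trans (hb 0)
    simpa using this
  refine ((gw_intexp m hm c hc).const_mul
    (C * (k.factorial * Real.exp (1 + 1 / (4 * c))))).mono'
    (hg.mul (gw_cont M)).aestronglyMeasurable (ae_of_all _ fun x => ?_)
  rw [norm_mul]
  have h1 : (1 + ‖x‖) ^ k ≤ k.factorial * Real.exp (1 + 1 / (4 * c)) * Real.exp (c * ‖x‖ ^ 2) := by
    have := Real.pow_div_factorial_le_exp (x := 1 + ‖x‖) (by positivity) k
    rw [div_le_iff₀ (by positivity)] at this
    have h2 : 1 + ‖x‖ ≤ 1 + 1 / (4 * c) + c * ‖x‖ ^ 2 := by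
      have e : 1 / (4 * c) + c * ‖x‖ ^ 2 - ‖x‖ = c * (‖x‖ - 1 / (2 * c)) ^ 2 := by
        field_simp; ring
      have : 0 ≤ c * (‖x‖ - 1 / (2 * c)) ^ 2 := by positivity
      linarith
    have h3 := Real.exp_le_exp.2 h2
    rw [Real.exp_add (1 + 1 / (4 * c))] at h3
    calc _ ≤ _ := this
      _ ≤ (Real.exp (1 + 1 / (4 * c)) * Real.exp (c * ‖x‖ ^ 2)) * k.factorial := by gcongr
      _ = _ := by ring
  have h4 : Real.exp (c * ‖x‖ ^ 2) * Real.exp (-(2 * c * ‖x‖ ^ 2)) = Real.exp (-(c * ‖x‖ ^ 2)) := by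
    rw [← Real.exp_add]; congr 1; ring
  calc _ ≤ (C * (k.factorial * Real.exp (1 + 1 / (4 * c)) * Real.exp (c * ‖x‖ ^ 2)))
          * Real.exp (-(2 * c * ‖x‖ ^ 2)) := by
        refine mul_le_mul ((hb x).trans ?_) (h x) (norm_nonneg _) (by positivity)
        gcongr
    _ = _ := by rw [← h4]; ring

lemma gw_fderiv {m : ℕ} (M : Matrix (Fin m) (Fin m) ℂ) (hsym : M.transpose = M)
    (x : Fin m → ℝ) (j : Fin m) :
    fderiv ℝ (fun x => Complex.exp (-(1/2 : ℂ) * quadForm m M x)) x (Pi.single j 1)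
      = -(∑ k, M j k * (x k : ℂ)) * Complex.exp (-(1/2 : ℂ) * quadForm m M x) := by
  have hc : ∀ i, HasFDerivAt (fun x : Fin m → ℝ => (x i : ℂ))
      (Complex.ofRealCLM.comp (ContinuousLinearMap.proj i)) x := fun i =>
    (Complex.ofRealCLM.comp (ContinuousLinearMap.proj (R := ℝ) (φ := fun _ : Fin m => ℝ) i)).hasFDerivAt
  have hq : HasFDerivAt (quadForm m M) _ x :=
    HasFDerivAt.fun_sum fun i (_ : i ∈ Finset.univ) => HasFDerivAt.fun_sum
      fun j (_ : j ∈ Finset.univ) => ((hc i).const_mul (M i j)).mul (hc j)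
  rw [((hq.const_mul (-(1/2 : ℂ))).cexp).fderiv]
  have hs : ∀ i k, M i k = M k i := fun i k => by rw [← Matrix.transpose_apply M, hsym]
  simp [Pi.single_apply, Finset.sum_add_distrib, apply_ite]
  have e1 : ∑ k, M k j * (x k : ℂ) = ∑ k, M j k * (x k : ℂ) :=
    Finset.sum_congr rfl fun k _ => by rw [hs k j]
  have e2 : ∑ k, (x k : ℂ) * M j k = ∑ k, M j k * (x k : ℂ) :=
    Finset.sum_congr rfl fun k _ => mul_comm _ _
  rw [e1, e2]
  ring

lemma gw_ibp {m : ℕ} (hm : 1 ≤ m) (M : Matrix (Fin m) (Fin m) ℂ) (hsym : M.transpose = M)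
    (hpos : (Matrix.of fun i j : Fin m => (M i j).re).PosDef) (f : (Fin m → ℝ) → ℂ)
    (hf : ContDiff ℝ 1 f)
    (hb : ∃ C : ℝ, ∃ k : ℕ, ∀ x : Fin m → ℝ, ‖f x‖ ≤ C * (1 + ‖x‖)^k)
    (hb' : ∃ C : ℝ, ∃ k : ℕ, ∀ x : Fin m → ℝ, ‖fderiv ℝ f x‖ ≤ C * (1 + ‖x‖)^k) (j : Fin m) :
    ∑ k, M j k * (∫ x : Fin m → ℝ, ((x k : ℝ) : ℂ) * f x
        * Complex.exp (-(1/2 : ℂ) * quadForm m M x)) =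
      ∫ x : Fin m → ℝ,
        fderiv ℝ f x (Pi.single j 1) * Complex.exp (-(1/2 : ℂ) * quadForm m M x) := by
  obtain ⟨C, n, hC⟩ := hb
  obtain ⟨C', n', hC'⟩ := hb'
  have i1 := gw_int hm M hsym hpos f hf.continuous C n hC
  have i2 := gw_int hm M hsym hpos (fun x => fderiv ℝ f x (Pi.single j 1))
    ((hf.continuous_fderiv one_ne_zero).clm_apply continuous_const) C' n' (fun x => by
      refine ((fderiv ℝ f x).le_opNorm _).trans ?_
      have : ‖(Pi.single j 1 : Fin m → ℝ)‖ = 1 := by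
        rw [Pi.norm_single]; simp
      rw [this, mul_one]
      exact hC' x)
  have i3 : ∀ k, Integrable (fun x : Fin m → ℝ => ((x k : ℝ) : ℂ) * f x
        * Complex.exp (-(1/2 : ℂ) * quadForm m M x)) := fun k =>
    gw_int hm M hsym hpos (fun x => ((x k : ℝ) : ℂ) * f x)
      (by have := hf.continuous; fun_prop) C (n + 1) (fun x => by
        rw [norm_mul, Complex.norm_real, pow_succ', mul_left_comm]
        refine mul_le_mul ?_ (hC x) (norm_nonneg _) (by positivity)
        have := norm_le_pi_norm x k
        linarith)
  have hd : ∀ x, f x * fderiv ℝ (fun x => Complex.exp (-(1/2 : ℂ) * quadForm m M x)) x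
      (Pi.single j 1) = - ∑ k, M j k * (((x k : ℝ) : ℂ) * f x
        * Complex.exp (-(1/2 : ℂ) * quadForm m M x)) := fun x => by
    rw [gw_fderiv M hsym, neg_mul, mul_neg, Finset.sum_mul, Finset.mul_sum]
    congr 1
    exact Finset.sum_congr rfl fun k _ => by ring
  have i4 : Integrable (fun x : Fin m → ℝ => ∑ k, M j k * (((x k : ℝ) : ℂ) * f x
        * Complex.exp (-(1/2 : ℂ) * quadForm m M x))) :=
    integrable_finsetSum _ fun k _ => (i3 k).const_mul _
  have key := integral_mul_fderiv_eq_neg_fderiv_mul_of_integrable (μ := volume)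
    (f := f) (g := fun x => Complex.exp (-(1/2 : ℂ) * quadForm m M x)) (v := Pi.single j 1)
    i2 (by simp only [hd]; exact i4.neg) i1
    (fun x _ => (hf.differentiable one_ne_zero) x)
    (fun x _ => by unfold quadForm; fun_prop)
  simp only [hd] at key
  rw [integral_neg, neg_inj, integral_finsetSum _ fun k _ => (i3 k).const_mul _] at key
  rw [← key]
  exact Finset.sum_congr rfl fun k _ => (integral_const_mul _ _).symm

/-- for a complex symmetric matrix `M` with positive definite real part,
the Gaussian integral `Z = ∫ e^{−(1/2)xᵀMx}dx` converges absolutely and is nonzero, `M` is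
invertible, the covariances are `⟨x_i x_j⟩ = (M⁻¹)_{ij}`, and the Gaussian integration-by-parts
(Wick) identity `⟨x_i f⟩ = ∑_j (M⁻¹)_{ij} ⟨∂f/∂x_j⟩` holds for every `C¹` function `f` of at
most polynomial growth together with its first-order partial derivatives. -/
theorem gaussian_wick (m : ℕ) (hm : 1 ≤ m) (M : Matrix (Fin m) (Fin m) ℂ)
    (hsym : M.transpose = M)
    (hpos : (Matrix.of fun i j : Fin m => (M i j).re).PosDef) :
    Integrable (fun x : Fin m → ℝ => Complex.exp (-(1/2 : ℂ) * quadForm m M x)) ∧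
    (∫ x : Fin m → ℝ, Complex.exp (-(1/2 : ℂ) * quadForm m M x)) ≠ 0 ∧
    IsUnit M.det ∧
    (∀ i j : Fin m,
      (∫ x : Fin m → ℝ, ((x i * x j : ℝ) : ℂ) * Complex.exp (-(1/2 : ℂ) * quadForm m M x)) /
          (∫ x : Fin m → ℝ, Complex.exp (-(1/2 : ℂ) * quadForm m M x))
        = M⁻¹ i j) ∧
    (∀ f : (Fin m → ℝ) → ℂ, ContDiff ℝ 1 f →
      (∃ C : ℝ, ∃ k : ℕ, ∀ x : Fin m → ℝ, ‖f x‖ ≤ C * (1 + ‖x‖)^k) →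
      (∃ C : ℝ, ∃ k : ℕ, ∀ x : Fin m → ℝ, ‖fderiv ℝ f x‖ ≤ C * (1 + ‖x‖)^k) →
      ∀ i : Fin m,
        (∫ x : Fin m → ℝ, ((x i : ℝ) : ℂ) * f x * Complex.exp (-(1/2 : ℂ) * quadForm m M x)) /
            (∫ x : Fin m → ℝ, Complex.exp (-(1/2 : ℂ) * quadForm m M x))
          = ∑ j : Fin m, M⁻¹ i j *
              ((∫ x : Fin m → ℝ,
                  fderiv ℝ f x (Pi.single j 1) * Complex.exp (-(1/2 : ℂ) * quadForm m M x)) /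
                (∫ x : Fin m → ℝ, Complex.exp (-(1/2 : ℂ) * quadForm m M x)))) := by
  have hZ := gw_ne M hsym hpos
  set Z := ∫ x : Fin m → ℝ, Complex.exp (-(1/2 : ℂ) * quadForm m M x) with hZd
  have hcov : M * (Matrix.of fun i j : Fin m => (∫ x : Fin m → ℝ, ((x i * x j : ℝ) : ℂ) *
      Complex.exp (-(1/2 : ℂ) * quadForm m M x)) / Z) = 1 := by
    ext i j
    have hL : ∀ x, HasFDerivAt (fun x : Fin m → ℝ => (x j : ℂ))
        (Complex.ofRealCLM.comp (ContinuousLinearMap.proj (R := ℝ) (φ := fun _ : Fin m => ℝ) j))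
        x := fun x => (Complex.ofRealCLM.comp
          (ContinuousLinearMap.proj (R := ℝ) (φ := fun _ : Fin m => ℝ) j)).hasFDerivAt
    have hfd := fun x => (hL x).fderiv
    have := gw_ibp hm M hsym hpos (fun x => (x j : ℂ))
      (Complex.ofRealCLM.comp
        (ContinuousLinearMap.proj (R := ℝ) (φ := fun _ : Fin m => ℝ) j)).contDiff
      ⟨1, 1, fun x => by
        have := norm_le_pi_norm x j
        rw [Complex.norm_real]; linarith⟩
      ⟨_, 0, fun x => by rw [hfd, pow_zero, mul_one]⟩ i
    simp only [hfd] at this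
    simp only [Matrix.mul_apply, Matrix.of_apply, mul_div_assoc', ← Finset.sum_div]
    push_cast
    rw [this, div_eq_iff hZ, Matrix.one_apply]
    by_cases hij : i = j
    · subst hij
      simp [hZd]
    · simp [hij, Pi.single_apply, Ne.symm hij]
  have hdet : IsUnit M.det := Matrix.isUnit_det_of_right_inverse hcov
  have hinv := Matrix.inv_eq_right_inv hcov
  refine ⟨?_, hZ, hdet, ?_, ?_⟩
  · simpa using gw_int hm M hsym hpos (fun _ => 1) continuous_const 1 0 (by simp)
  · intro i j
    rw [hinv, Matrix.of_apply]
  · intro f hf hb hb' i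
    have h := gw_ibp hm M hsym hpos f hf hb hb'
    simp only [← h, mul_div_assoc', ← Finset.sum_div]
    congr 1
    have h2 : M.mulVec (fun k => ∫ x : Fin m → ℝ, ((x k : ℝ) : ℂ) * f x
        * Complex.exp (-(1/2 : ℂ) * quadForm m M x)) = fun j => ∑ k, M j k *
        ∫ x : Fin m → ℝ, ((x k : ℝ) : ℂ) * f x
        * Complex.exp (-(1/2 : ℂ) * quadForm m M x) := rfl
    have h3 := congrArg (M⁻¹.mulVec) h2
    rw [Matrix.mulVec_mulVec, Matrix.nonsing_inv_mul _ hdet, Matrix.one_mulVec] at h3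
    exact congrFun h3 i
end
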